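/- arXiv:2603.17344 — 7 statements merged into one kernel-verified Lean document; each statement's English description precedes it below -/
import Mathlib

section
/- Suppose Assumption 2 holds for X ⊆ ℝ^n, Ξ ⊆ ℝ^m, g : X × Ξ → ℝ, exponents (γ, ρ), and limit function g*, and suppose ρ > 0. Then 0 ∈ X^∞_γ and g*(0, 0) = 0. -/
open Filter Topology MeasureTheory Set

noncomputable section

/-- Euclidean space `ℝ^d`. -/
abbrev Rn (d : ℕ) : Type := EuclideanSpace ℝ (Fin d)

/-- A set is a cone: closed under multiplication by positive scalars. -/
def IsPosCone {d : ℕ} (Z : Set (Rn d)) : Prop :=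
  ∀ c : ℝ, 0 < c → ∀ z ∈ Z, c • z ∈ Z

/-- The asymptotic cone `A^∞_θ` of a set `A` with rate `θ`. -/
def asymCone {d : ℕ} (A : Set (Rn d)) (θ : ℝ) : Set (Rn d) :=
  {y | ∃ a : ℕ → Rn d, ∃ lamk : ℕ → ℝ,
    (∀ k, a k ∈ A) ∧ (∀ k, 0 < lamk k) ∧ Tendsto lamk atTop atTop ∧
    Tendsto (fun k => (lamk k ^ θ)⁻¹ • a k) atTop (𝓝 y)}

/-- Condition (A1): `gs` is a continuous limit function on `X^∞_γ × Ξ` and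
`g(x_u, z_u)/u^ρ → gs(y, w)` along all admissible families. -/
def CondA1 {n m : ℕ} (X : Set (Rn n)) (Ξ : Set (Rn m)) (g : Rn n → Rn m → ℝ)
    (γ ρ : ℝ) (gs : Rn n → Rn m → ℝ) : Prop :=
  ContinuousOn (fun p : Rn n × Rn m => gs p.1 p.2) ((asymCone X γ) ×ˢ Ξ) ∧
  ∀ y ∈ asymCone X γ, ∀ w ∈ Ξ, ∀ xu : ℝ → Rn n, ∀ zu : ℝ → Rn m,
    (∀ u : ℝ, 0 < u → xu u ∈ X) → (∀ u : ℝ, 0 < u → zu u ∈ Ξ) →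
    Tendsto (fun u : ℝ => (u ^ γ)⁻¹ • xu u) atTop (𝓝 y) →
    Tendsto (fun u : ℝ => u⁻¹ • zu u) atTop (𝓝 w) →
    Tendsto (fun u : ℝ => g (xu u) (zu u) / u ^ ρ) atTop (𝓝 (gs y w))

/-- Condition (A2): `X^∞_γ \ {0} ≠ ∅`. -/
def CondA2 {n : ℕ} (X : Set (Rn n)) (γ : ℝ) : Prop :=
  (asymCone X γ \ {0}).Nonempty

/-- Condition (A3): `gs(y, 0) < 0` for all `y ∈ X^∞_γ \ {0}`. -/
def CondA3 {n m : ℕ} (X : Set (Rn n)) (γ : ℝ) (gs : Rn n → Rn m → ℝ) : Prop :=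
  ∀ y ∈ asymCone X γ \ {0}, gs y 0 < 0

/-- Condition (A4): every `y ∈ X^∞_γ \ {0}` admits `w ∈ Ξ` with `gs(y, w) > 0`. -/
def CondA4 {n m : ℕ} (X : Set (Rn n)) (Ξ : Set (Rn m)) (γ : ℝ)
    (gs : Rn n → Rn m → ℝ) : Prop :=
  ∀ y ∈ asymCone X γ \ {0}, ∃ w ∈ Ξ, 0 < gs y w

/-- Condition (A5): if `γ < 0` then `g(0, z) ≤ 0` for all `z ∈ Ξ`. -/
def CondA5 {n m : ℕ} (Ξ : Set (Rn m)) (g : Rn n → Rn m → ℝ) (γ : ℝ) : Prop :=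
  γ < 0 → ∀ z ∈ Ξ, g 0 z ≤ 0

/-- Regularity preconditions of Assumption 2: `X` nonempty closed convex, `Ξ` a
nonempty closed cone, `g(·, z)` convex and lower semicontinuous on `X` for each
`z ∈ Ξ`, and `g(x, ·)` continuous on `Ξ` for each `x ∈ X`. -/
def GRegular {n m : ℕ} (X : Set (Rn n)) (Ξ : Set (Rn m))
    (g : Rn n → Rn m → ℝ) : Prop :=
  X.Nonempty ∧ IsClosed X ∧ Convex ℝ X ∧
  Ξ.Nonempty ∧ IsClosed Ξ ∧ IsPosCone Ξ ∧
  (∀ z ∈ Ξ, ConvexOn ℝ X (fun x => g x z)) ∧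
  (∀ z ∈ Ξ, LowerSemicontinuousOn (fun x => g x z) X) ∧
  (∀ x ∈ X, ContinuousOn (fun z => g x z) Ξ)

/-- Assumption 2: the regularity preconditions together with conditions (A1)–(A5)
for exponents `(γ, ρ)` with `γ ≠ 0`, `ρ ≥ 0`, and limit function `gs`. -/
def Assumption2 {n m : ℕ} (X : Set (Rn n)) (Ξ : Set (Rn m)) (g : Rn n → Rn m → ℝ)
    (γ ρ : ℝ) (gs : Rn n → Rn m → ℝ) : Prop :=
  GRegular X Ξ g ∧ γ ≠ 0 ∧ 0 ≤ ρ ∧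
  CondA1 X Ξ g γ ρ gs ∧ CondA2 X γ ∧ CondA3 X γ gs ∧ CondA4 X Ξ γ gs ∧
  CondA5 Ξ g γ

/-- Under Assumption 2 with `ρ > 0`, the limit function vanishes at the origin. -/
theorem gstar_origin_pos_rho {n m : ℕ} (X : Set (Rn n)) (Ξ : Set (Rn m))
    (g : Rn n → Rn m → ℝ) (γ ρ : ℝ) (gs : Rn n → Rn m → ℝ)
    (hA2 : Assumption2 X Ξ g γ ρ gs) (hρ : 0 < ρ) :
    (0 : Rn n) ∈ asymCone X γ ∧ gs 0 0 = 0 := by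
  obtain ⟨⟨⟨x1, hx1⟩, hXc, -, ⟨z1, hz1⟩, hΞc, hΞ, -, -, -⟩, hγ, -, ⟨-, hA1⟩, ⟨y, hy, -⟩, -, -, -⟩ := hA2
  have h0Ξ : (0 : Rn m) ∈ Ξ := by
    have ht : Tendsto (fun u : ℝ => u⁻¹ • z1) atTop (𝓝 0) := by
      simpa using (tendsto_inv_atTop_zero (𝕜 := ℝ)).smul_const z1
    refine hΞc.mem_of_tendsto ht ?_
    filter_upwards [eventually_gt_atTop 0] with u hu
    exact hΞ _ (inv_pos.mpr hu) _ hz1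
  have key : ∃ x0 ∈ X, Tendsto (fun u : ℝ => (u ^ γ)⁻¹ • x0) atTop (𝓝 0) := by
    rcases lt_or_gt_of_ne hγ with hneg | hpos
    · refine ⟨0, ?_, by simp⟩
      obtain ⟨a, l, ha, hl, hlt, hlim⟩ := hy
      have h1 : Tendsto (fun k => l k ^ γ) atTop (𝓝 0) := by
        have := (tendsto_rpow_neg_atTop (neg_pos.mpr hneg)).comp hlt
        simpa [Function.comp_def] using this
      have h2 := h1.smul hlim
      rw [zero_smul] at h2
      refine hXc.mem_of_tendsto h2 (Eventually.of_forall fun k => ?_)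
      have : l k ^ γ ≠ 0 := (Real.rpow_pos_of_pos (hl k) γ).ne'
      simpa [smul_smul, this] using ha k
    · refine ⟨x1, hx1, ?_⟩
      simpa using ((tendsto_rpow_atTop hpos).inv_tendsto_atTop).smul_const x1
  obtain ⟨x0, hx0, hlim⟩ := key
  have h0 : (0 : Rn n) ∈ asymCone X γ := by
    have hl : Tendsto (fun k : ℕ => (k : ℝ) + 1) atTop atTop :=
      tendsto_atTop_add_const_right _ _ tendsto_natCast_atTop_atTop
    exact ⟨fun _ => x0, fun k => (k : ℝ) + 1, fun _ => hx0, fun k => by positivity, hl,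
      hlim.comp hl⟩
  refine ⟨h0, ?_⟩
  have hA := hA1 0 h0 0 h0Ξ (fun _ => x0) (fun _ => 0) (fun _ _ => hx0) (fun _ _ => h0Ξ) hlim
    (by simp)
  have hB : Tendsto (fun u : ℝ => g x0 0 / u ^ ρ) atTop (𝓝 0) :=
    tendsto_const_nhds.div_atTop (tendsto_rpow_atTop hρ)
  exact tendsto_nhds_unique hA hB
end
end

section
/- Suppose Assumption 2 holds for X ⊆ ℝ^n, Ξ ⊆ ℝ^m, g : X × Ξ → ℝ, exponents (γ, ρ), and limit function g*, and suppose ρ = 0. Then 0 ∈ X^∞_γ and g*(0, w) < 0 for every w ∈ Ξ. -/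
open Filter Topology MeasureTheory Set

noncomputable section

lemma aux_family {n : ℕ} {X : Set (Rn n)} {γ : ℝ} (hne : X.Nonempty) (hcl : IsClosed X)
    (hcv : Convex ℝ X) (hγ : γ ≠ 0) {y : Rn n} (hy : y ∈ asymCone X γ) :
    (∃ xu : ℝ → Rn n, (∀ u : ℝ, 0 < u → xu u ∈ X) ∧
      Tendsto (fun u : ℝ => (u ^ γ)⁻¹ • xu u) atTop (𝓝 y)) ∧ (0 : Rn n) ∈ asymCone X γ := by
  obtain ⟨a, l, ha, hl, hlt, hlim⟩ := hy
  rcases lt_or_gt_of_ne hγ with hneg | hpos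
  · have hpow : Tendsto (fun k => l k ^ γ) atTop (𝓝 0) := by
      have := (tendsto_rpow_neg_atTop (y := -γ) (by linarith)).comp hlt
      simpa [Function.comp_def] using this
    have ha0 : Tendsto a atTop (𝓝 0) := by
      have := hpow.smul hlim
      simp only [zero_smul] at this
      refine this.congr fun k => ?_
      rw [smul_inv_smul₀ (Real.rpow_pos_of_pos (hl k) γ).ne']
    have h0 : (0 : Rn n) ∈ X := hcl.mem_of_tendsto ha0 (Eventually.of_forall ha)
    refine ⟨?_, fun _ => 0, l, fun _ => h0, hl, hlt, by simp⟩
    have hp : ∀ u : ℝ, ∃ p ∈ X, Metric.infDist (u ^ γ • y) X = dist (u ^ γ • y) p :=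
      fun u => hcl.exists_infDist_eq_dist hne _
    choose p hpX hpd using hp
    refine ⟨p, fun u _ => hpX u, ?_⟩
    rw [Metric.tendsto_atTop]
    intro ε hε
    obtain ⟨k, hk⟩ := ((Metric.tendsto_nhds.1 hlim) ε hε).exists
    refine ⟨l k, fun u hu => ?_⟩
    have hu0 : 0 < u := (hl k).trans_le hu
    have hup := Real.rpow_pos_of_pos hu0 γ
    have hlp := Real.rpow_pos_of_pos (hl k) γ
    have hle : u ^ γ ≤ l k ^ γ := Real.rpow_le_rpow_of_nonpos (hl k) hu hneg.le
    have hmem : u ^ γ • ((l k ^ γ)⁻¹ • a k) ∈ X := by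
      rw [smul_smul]
      refine hcv.smul_mem_of_zero_mem h0 (ha k) ⟨by positivity, ?_⟩
      rw [← div_eq_mul_inv]
      exact (div_le_one hlp).2 hle
    have h1 : dist (u ^ γ • y) (p u) ≤ dist (u ^ γ • y) (u ^ γ • ((l k ^ γ)⁻¹ • a k)) := by
      rw [← hpd]
      exact Metric.infDist_le_dist_of_mem hmem
    have h2 : p u = u ^ γ • ((u ^ γ)⁻¹ • p u) := (smul_inv_smul₀ hup.ne' _).symm
    rw [h2, dist_smul₀, dist_smul₀] at h1
    have h3 := le_of_mul_le_mul_left h1 (norm_pos_iff.2 hup.ne')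
    rw [dist_comm] at h3 hk
    exact h3.trans_lt hk
  · obtain ⟨x0, hx0⟩ := hne
    have hinv : Tendsto (fun u : ℝ => (u ^ γ)⁻¹) atTop (𝓝 0) :=
      (tendsto_rpow_atTop hpos).inv_tendsto_atTop
    have hinvx : Tendsto (fun u : ℝ => (u ^ γ)⁻¹ • x0) atTop (𝓝 0) := by
      simpa using hinv.smul_const x0
    refine ⟨?_, fun _ => x0, l, fun _ => hx0, hl, hlt, hinvx.comp hlt⟩
    have hray : ∀ s : ℝ, 0 ≤ s → x0 + s • y ∈ X := by
      intro s hs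
      have hik : Tendsto (fun k => (l k ^ γ)⁻¹) atTop (𝓝 0) := hinv.comp hlt
      have hc : Tendsto (fun k => (1 - s * (l k ^ γ)⁻¹) • x0 + s • ((l k ^ γ)⁻¹ • a k)) atTop
          (𝓝 ((1 - s * 0) • x0 + s • y)) :=
        ((tendsto_const_nhds.sub (hik.const_mul s)).smul_const x0).add (hlim.const_smul s)
      have hc' : x0 + s • y = (1 - s * 0) • x0 + s • y := by simp
      rw [hc']
      refine hcl.mem_of_tendsto hc ?_
      have hsm : ∀ᶠ k in atTop, s * (l k ^ γ)⁻¹ < 1 :=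
        (hik.const_mul s).eventually (gt_mem_nhds (by simp))
      filter_upwards [hsm] with k hk
      have := Real.rpow_pos_of_pos (hl k) γ
      rw [smul_smul]
      exact hcv hx0 (ha k) (by linarith) (by positivity) (by ring)
    refine ⟨fun u => x0 + u ^ γ • y, fun u hu => hray _ (Real.rpow_nonneg hu.le _), ?_⟩
    have : Tendsto (fun u : ℝ => (u ^ γ)⁻¹ • x0 + y) atTop (𝓝 (0 + y)) :=
      hinvx.add tendsto_const_nhds
    rw [zero_add] at this
    refine this.congr' ?_
    filter_upwards [eventually_gt_atTop 0] with u hu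
    rw [smul_add, inv_smul_smul₀ (Real.rpow_pos_of_pos hu γ).ne']

lemma aux_scale {n m : ℕ} {X : Set (Rn n)} {Ξ : Set (Rn m)}
    {g : Rn n → Rn m → ℝ} {γ : ℝ} {gs : Rn n → Rn m → ℝ}
    (hne : X.Nonempty) (hcl : IsClosed X) (hcv : Convex ℝ X) (hγ : γ ≠ 0)
    (hcone : IsPosCone Ξ) (hA1 : CondA1 X Ξ g γ 0 gs)
    {y : Rn n} (hy : y ∈ asymCone X γ) {w : Rn m} (hw : w ∈ Ξ) {t : ℝ} (ht : 0 < t) :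
    t ^ γ • y ∈ asymCone X γ ∧ gs (t ^ γ • y) (t • w) = gs y w := by
  obtain ⟨⟨xu, hxu, hlim⟩, -⟩ := aux_family hne hcl hcv hγ hy
  have htt : Tendsto (fun u : ℝ => t * u) atTop atTop := tendsto_id.const_mul_atTop ht
  have hlim' : Tendsto (fun u : ℝ => (u ^ γ)⁻¹ • xu (t * u)) atTop (𝓝 (t ^ γ • y)) := by
    refine ((hlim.comp htt).const_smul (t ^ γ)).congr' ?_
    filter_upwards [eventually_gt_atTop 0] with u hu
    have := Real.rpow_pos_of_pos ht γ
    have := Real.rpow_pos_of_pos hu γ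
    simp only [Function.comp_def]
    rw [smul_smul, Real.mul_rpow ht.le hu.le]
    congr 1
    field_simp
  have hmem : t ^ γ • y ∈ asymCone X γ := by
    have hN : Tendsto (fun k : ℕ => (k : ℝ) + 1) atTop atTop :=
      tendsto_atTop_add_const_right _ _ tendsto_natCast_atTop_atTop
    refine ⟨fun k => xu (t * ((k : ℝ) + 1)), fun k => (k : ℝ) + 1, fun k => hxu _ (by positivity),
      fun k => by positivity, hN, hlim'.comp hN⟩
  refine ⟨hmem, ?_⟩
  have h1 := hA1.2 y hy w hw xu (fun u => u • w) hxu (fun u hu => hcone u hu w hw) hlim (by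
    refine tendsto_const_nhds.congr' ?_
    filter_upwards [eventually_gt_atTop 0] with u hu
    rw [inv_smul_smul₀ hu.ne'])
  have h2 := hA1.2 _ hmem (t • w) (hcone t ht w hw) (fun u => xu (t * u)) (fun u => (t * u) • w)
    (fun u hu => hxu _ (by positivity)) (fun u hu => hcone _ (by positivity) w hw) hlim' (by
    refine tendsto_const_nhds.congr' ?_
    filter_upwards [eventually_gt_atTop 0] with u hu
    rw [mul_comm, mul_smul, inv_smul_smul₀ hu.ne'])
  simp only [Real.rpow_zero, div_one] at h1 h2
  exact tendsto_nhds_unique h2 (h1.comp htt)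

/-- Under Assumption 2 with `ρ = 0`, the limit function is strictly negative at the
origin in the first argument, for every `w ∈ Ξ`. -/
theorem gstar_origin_zero_rho {n m : ℕ} (X : Set (Rn n)) (Ξ : Set (Rn m))
    (g : Rn n → Rn m → ℝ) (γ ρ : ℝ) (gs : Rn n → Rn m → ℝ)
    (hA2 : Assumption2 X Ξ g γ ρ gs) (hρ : ρ = 0) :
    (0 : Rn n) ∈ asymCone X γ ∧ ∀ w ∈ Ξ, gs 0 w < 0 := by
  subst hρ
  obtain ⟨⟨hne, hcl, hcv, ⟨z0, hz0⟩, hΞcl, hcone, -, -, -⟩, hγ, -, hA1, ⟨y, hy, hy0⟩, hA3, -, -⟩ := hA2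
  have h0 := (aux_family hne hcl hcv hγ hy).2
  have hinv : Tendsto (fun k : ℕ => ((k : ℝ) + 1)⁻¹) atTop (𝓝 0) :=
    (tendsto_atTop_add_const_right _ _ tendsto_natCast_atTop_atTop).inv_tendsto_atTop
  have hpos : ∀ k : ℕ, 0 < ((k : ℝ) + 1)⁻¹ := fun k => by positivity
  have hz : (0 : Rn m) ∈ Ξ := by
    have : Tendsto (fun k : ℕ => ((k : ℝ) + 1)⁻¹ • z0) atTop (𝓝 0) := by
      simpa using hinv.smul_const z0
    exact hΞcl.mem_of_tendsto this (Eventually.of_forall fun k => hcone _ (hpos k) _ hz0)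
  have hcont := hA1.1 (0, 0) ⟨h0, hz⟩
  have key : gs 0 0 = gs y 0 := by
    have hs : ∀ k : ℕ, ((k : ℝ) + 1)⁻¹ • y ∈ asymCone X γ ∧
        gs (((k : ℝ) + 1)⁻¹ • y) 0 = gs y 0 := by
      intro k
      have := aux_scale hne hcl hcv hγ hcone hA1 hy hz
        (Real.rpow_pos_of_pos (hpos k) γ⁻¹)
      rwa [smul_zero, Real.rpow_inv_rpow (hpos k).le hγ] at this
    have ht : Tendsto (fun k : ℕ => ((((k : ℝ) + 1)⁻¹ • y, 0) : Rn n × Rn m)) atTop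
        (𝓝[(asymCone X γ) ×ˢ Ξ] (0, 0)) := by
      refine tendsto_nhdsWithin_iff.2 ⟨?_, Eventually.of_forall fun k => ⟨(hs k).1, hz⟩⟩
      exact Tendsto.prodMk_nhds (by simpa using hinv.smul_const y) tendsto_const_nhds
    have hl := Tendsto.comp hcont ht
    refine tendsto_nhds_unique hl (tendsto_const_nhds.congr fun k => ?_)
    simp only [Function.comp_def]
    exact (hs k).2.symm
  refine ⟨h0, fun w hw => ?_⟩
  have key2 : gs 0 0 = gs 0 w := by
    have hs : ∀ k : ℕ, gs 0 (((k : ℝ) + 1)⁻¹ • w) = gs 0 w := by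
      intro k
      have := (aux_scale hne hcl hcv hγ hcone hA1 h0 hw (hpos k)).2
      rwa [smul_zero] at this
    have ht : Tendsto (fun k : ℕ => ((0, ((k : ℝ) + 1)⁻¹ • w) : Rn n × Rn m)) atTop
        (𝓝[(asymCone X γ) ×ˢ Ξ] (0, 0)) := by
      refine tendsto_nhdsWithin_iff.2
        ⟨?_, Eventually.of_forall fun k => ⟨h0, hcone _ (hpos k) _ hw⟩⟩
      exact Tendsto.prodMk_nhds tendsto_const_nhds (by simpa using hinv.smul_const w)
    have hl := Tendsto.comp hcont ht
    refine tendsto_nhds_unique hl (tendsto_const_nhds.congr fun k => ?_)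
    simp only [Function.comp_def]
    exact (hs k).symm
  rw [← key2, key]
  exact hA3 y ⟨hy, hy0⟩
end
end

section
/- Suppose Assumption 2 holds for X ⊆ ℝ^n, Ξ ⊆ ℝ^m, g : X × Ξ → ℝ, exponents (γ, ρ), and limit function g*. Then for every fixed w ∈ Ξ the function g*(·, w) is convex on X^∞_γ: for all y₁, y₂ ∈ X^∞_γ and all t ∈ [0,1], the point t y₁ + (1−t) y₂ belongs to X^∞_γ and g*(t y₁ + (1−t) y₂, w) ≤ t g*(y₁, w) + (1−t) g*(y₂, w). -/
open Filter Topology MeasureTheory Set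

noncomputable section

/-- Every point of the asymptotic cone of a closed convex set is attained along a full family. -/
theorem exists_family {d : ℕ} (X : Set (Rn d)) (hne : X.Nonempty) (hcl : IsClosed X)
    (hco : Convex ℝ X) (γ : ℝ) (hγ : γ ≠ 0) (y : Rn d) (hy : y ∈ asymCone X γ) :
    ∃ xu : ℝ → Rn d, (∀ u, xu u ∈ X) ∧
      Tendsto (fun u : ℝ => (u ^ γ)⁻¹ • xu u) atTop (𝓝 y) := by
  obtain ⟨a, l, ha, hl, hlt, hlim⟩ := hy
  -- a base point, and comparison of scales
  have key : ∃ x0 ∈ X, Tendsto (fun u : ℝ => (u ^ γ)⁻¹ • x0) atTop (𝓝 0) ∧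
      ∀ K : ℕ, ∀ᶠ u : ℝ in atTop, ∃ k ≥ K, u ^ γ ≤ l k ^ γ := by
    rcases lt_or_gt_of_ne hγ with h | h
    · have h0 : Tendsto (fun k => l k ^ γ) atTop (𝓝 0) := by
        have := (tendsto_rpow_neg_atTop (neg_pos.mpr h)).comp hlt
        simpa [Function.comp_def] using this
      have h1 : Tendsto a atTop (𝓝 0) := by
        have := h0.smul hlim
        rw [zero_smul] at this
        refine this.congr fun k => ?_
        rw [smul_smul, mul_inv_cancel₀ (Real.rpow_pos_of_pos (hl k) γ).ne', one_smul]
      refine ⟨0, hcl.mem_of_tendsto h1 (Eventually.of_forall ha), by simp, fun K => ?_⟩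
      filter_upwards [eventually_ge_atTop (l K)] with u hu
      exact ⟨K, le_rfl, Real.rpow_le_rpow_of_nonpos (hl K) hu h.le⟩
    · obtain ⟨x0, hx0⟩ := hne
      refine ⟨x0, hx0, ?_, fun K => ?_⟩
      · have := (tendsto_rpow_atTop h).inv_tendsto_atTop.smul_const x0
        simpa using this
      · filter_upwards [eventually_ge_atTop 0] with u hu
        obtain ⟨k, hk, hk'⟩ := ((eventually_ge_atTop K).and (hlt.eventually_ge_atTop u)).exists
        exact ⟨k, hk, Real.rpow_le_rpow hu hk' h.le⟩
  obtain ⟨x0, hx0, hx0lim, hscale⟩ := key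
  have hproj : ∀ u : ℝ, ∃ x ∈ X, ∀ x' ∈ X, dist (u ^ γ • y) x ≤ dist (u ^ γ • y) x' := by
    intro u
    obtain ⟨x, hx, hd⟩ := hcl.exists_infDist_eq_dist hne (u ^ γ • y)
    exact ⟨x, hx, fun x' hx' => hd ▸ Metric.infDist_le_dist_of_mem hx'⟩
  choose xu hxu hmin using hproj
  refine ⟨xu, hxu, ?_⟩
  rw [Metric.tendsto_nhds]
  intro ε hε
  obtain ⟨K, hK⟩ := eventually_atTop.1 ((Metric.tendsto_nhds.1 hlim) (ε / 2) (by positivity))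
  filter_upwards [hscale K, (Metric.tendsto_nhds.1 hx0lim) (ε / 2) (by positivity),
    eventually_gt_atTop 0] with u ⟨k, hk, hle⟩ hx0u hu
  have hak := hK k hk
  have hs : 0 < u ^ γ := Real.rpow_pos_of_pos hu γ
  have hsk : 0 < l k ^ γ := Real.rpow_pos_of_pos (hl k) γ
  generalize hsdef : u ^ γ = s at *
  generalize l k ^ γ = r at *
  have hr1 : s / r ≤ 1 := (div_le_one hsk).2 hle
  have hr0 : 0 ≤ s / r := by positivity
  have hmem : (1 - s / r) • x0 + (s / r) • a k ∈ X :=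
    hco hx0 (ha k) (by linarith) hr0 (by ring)
  have hm := hmin u _ hmem
  rw [hsdef] at hm
  have e1 : dist (s⁻¹ • xu u) y = s⁻¹ * dist (s • y) (xu u) := by
    rw [dist_comm, ← abs_of_pos (inv_pos.2 hs), ← Real.norm_eq_abs, ← dist_smul₀, smul_smul,
      Real.norm_eq_abs, abs_of_pos (inv_pos.2 hs), inv_mul_cancel₀ hs.ne', one_smul]
  have e2 : s⁻¹ * dist (s • y) ((1 - s / r) • x0 + (s / r) • a k)
      = ‖(1 - s / r) • (s⁻¹ • x0) + (r⁻¹ • a k - y)‖ := by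
    rw [← abs_of_pos (inv_pos.2 hs), ← Real.norm_eq_abs, dist_comm, dist_eq_norm, ← norm_smul,
      Real.norm_eq_abs, abs_of_pos (inv_pos.2 hs)]
    congr 1
    simp only [smul_sub, smul_add, smul_smul, inv_mul_cancel₀ hs.ne', one_smul]
    rw [show s⁻¹ * (s / r) = r⁻¹ by field_simp, mul_comm s⁻¹]
    abel
  rw [dist_zero_right] at hx0u
  rw [dist_eq_norm] at hak
  have e3 : ‖(1 - s / r) • (s⁻¹ • x0)‖ ≤ ‖s⁻¹ • x0‖ := by
    rw [norm_smul, Real.norm_eq_abs, abs_of_nonneg (by linarith)]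
    exact mul_le_of_le_one_left (norm_nonneg _) (by linarith)
  calc dist (s⁻¹ • xu u) y = s⁻¹ * dist (s • y) (xu u) := e1
    _ ≤ s⁻¹ * dist (s • y) ((1 - s / r) • x0 + (s / r) • a k) := by gcongr
    _ ≤ ‖(1 - s / r) • (s⁻¹ • x0)‖ + ‖r⁻¹ • a k - y‖ := e2 ▸ norm_add_le _ _
    _ < ε := by linarith

/-- Under Assumption 2, for every fixed `w ∈ Ξ` the limit function `gs(·, w)` is
convex on the asymptotic cone `X^∞_γ`. -/
theorem gstar_convex {n m : ℕ} (X : Set (Rn n)) (Ξ : Set (Rn m))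
    (g : Rn n → Rn m → ℝ) (γ ρ : ℝ) (gs : Rn n → Rn m → ℝ)
    (hA2 : Assumption2 X Ξ g γ ρ gs) :
    ∀ w ∈ Ξ, ∀ y₁ ∈ asymCone X γ, ∀ y₂ ∈ asymCone X γ, ∀ t ∈ Set.Icc (0 : ℝ) 1,
      t • y₁ + (1 - t) • y₂ ∈ asymCone X γ ∧
      gs (t • y₁ + (1 - t) • y₂) w ≤ t * gs y₁ w + (1 - t) * gs y₂ w := by
  obtain ⟨⟨hne, hcl, hco, -, -, hcone, hconv, -, -⟩, hγ, -, ⟨-, hA1⟩, -⟩ := hA2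
  intro w hw y₁ hy₁ y₂ hy₂ t ⟨ht0, ht1⟩
  obtain ⟨x₁, hx₁, hl₁⟩ := exists_family X hne hcl hco γ hγ y₁ hy₁
  obtain ⟨x₂, hx₂, hl₂⟩ := exists_family X hne hcl hco γ hγ y₂ hy₂
  have hx : ∀ u, t • x₁ u + (1 - t) • x₂ u ∈ X := fun u =>
    hco (hx₁ u) (hx₂ u) ht0 (by linarith) (by ring)
  have hl : Tendsto (fun u : ℝ => (u ^ γ)⁻¹ • (t • x₁ u + (1 - t) • x₂ u)) atTop
      (𝓝 (t • y₁ + (1 - t) • y₂)) := by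
    refine ((hl₁.const_smul t).add (hl₂.const_smul (1 - t))).congr fun u => ?_
    rw [smul_add, smul_comm t, smul_comm (1 - t)]
  have hmem : t • y₁ + (1 - t) • y₂ ∈ asymCone X γ := by
    have hN : Tendsto (fun k : ℕ => (k : ℝ) + 1) atTop atTop :=
      tendsto_atTop_add_const_right _ _ tendsto_natCast_atTop_atTop
    exact ⟨fun k => t • x₁ ((k : ℝ) + 1) + (1 - t) • x₂ ((k : ℝ) + 1), fun k => (k : ℝ) + 1,
      fun k => hx _, fun k => by positivity, hN, hl.comp hN⟩
  refine ⟨hmem, ?_⟩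
  have hz : ∀ u : ℝ, 0 < u → u • w ∈ Ξ := fun u hu => hcone u hu w hw
  have hzl : Tendsto (fun u : ℝ => u⁻¹ • (u • w)) atTop (𝓝 w) := by
    refine tendsto_const_nhds.congr' ?_
    filter_upwards [eventually_gt_atTop 0] with u hu
    rw [smul_smul, inv_mul_cancel₀ hu.ne', one_smul]
  have L := hA1 _ hmem w hw _ (fun u => u • w) (fun u _ => hx u) hz hl hzl
  have L₁ := hA1 _ hy₁ w hw _ (fun u => u • w) (fun u _ => hx₁ u) hz hl₁ hzl
  have L₂ := hA1 _ hy₂ w hw _ (fun u => u • w) (fun u _ => hx₂ u) hz hl₂ hzl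
  refine le_of_tendsto_of_tendsto L ((L₁.const_mul t).add (L₂.const_mul (1 - t))) ?_
  filter_upwards [eventually_gt_atTop 0] with u hu
  have h := (hconv _ (hz u hu)).2 (hx₁ u) (hx₂ u) ht0 (by linarith : 0 ≤ 1 - t) (by ring)
  simp only [smul_eq_mul] at h
  have hp : 0 < u ^ ρ := Real.rpow_pos_of_pos hu ρ
  calc _ ≤ (t * g (x₁ u) (u • w) + (1 - t) * g (x₂ u) (u • w)) / u ^ ρ := by gcongr
    _ = _ := by ring
end
end

section
/- Suppose Assumption 1 holds with support Ξ, directional function λ and tail index α > 0, and Assumption 2 holds for X ⊆ ℝ^n, the same closed cone Ξ, g, exponents (γ, ρ), and limit function g*. Define the rate function I(y) := inf{λ(w) : w ∈ Ξ, g*(y, w) ≥ 0} for y ∈ X^∞_γ, with the convention inf ∅ = +∞. Then for every nonempty compact set K ⊆ X^∞_γ \ {0} there exist constants c > 0 and M < ∞ such that c ≤ I(y) ≤ M for all y ∈ K. -/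
open Filter Topology MeasureTheory Set

noncomputable section

/-- `f : (0,∞) → (0,∞)` is regularly varying with index `κ`:
`f(uz)/f(u) → z^κ` as `u → ∞`, for every `z > 0`. -/
def RegVary (f : ℝ → ℝ) (κ : ℝ) : Prop :=
  (∀ u : ℝ, 0 < u → 0 < f u) ∧
  ∀ z : ℝ, 0 < z → Tendsto (fun u : ℝ => f (u * z) / f u) atTop (𝓝 (z ^ κ))

/-- `f ∈ MRV(Z, h, f*)` (multivariate regular variation on the cone `Z`), except
for the requirement `h ∈ RV(κ)` which is stated separately: `f, f* : Z → [0,∞)`,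
`f*` continuous on `Z`, and `f(u • z_u)/h(u) → f*(z)` whenever `z_u → z` in `Z`. -/
def MultiRegVary {d : ℕ} (Z : Set (Rn d)) (f : Rn d → ℝ) (h : ℝ → ℝ)
    (fstar : Rn d → ℝ) : Prop :=
  (∀ z ∈ Z, 0 ≤ f z) ∧ (∀ z ∈ Z, 0 ≤ fstar z) ∧ ContinuousOn fstar Z ∧
  ∀ z ∈ Z, ∀ zu : ℝ → Rn d, (∀ u : ℝ, 0 < u → zu u ∈ Z) →
    Tendsto zu atTop (𝓝 z) →
    Tendsto (fun u : ℝ => f (u • zu u) / h u) atTop (𝓝 (fstar z))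

/-- Assumption 1: `P` is a Borel probability measure on `ℝ^m` whose support is the
nonempty closed cone `Ξ`, with density `exp (-Q z)` on `Ξ` (and `0` outside) w.r.t.
Lebesgue measure, `Q ∈ MRV(Ξ, q, lam)` with `q ∈ RV(α)`, `α > 0`, and `lam > 0`
on unit vectors of `Ξ`. -/
def Assumption1 {d : ℕ} (P : Measure (Rn d)) (Ξ : Set (Rn d))
    (Q : Rn d → ℝ) (q : ℝ → ℝ) (lam : Rn d → ℝ) (α : ℝ) : Prop :=
  IsProbabilityMeasure P ∧
  Ξ.Nonempty ∧ IsClosed Ξ ∧ IsPosCone Ξ ∧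
  -- Ξ is the support of P: the smallest closed set of full measure
  P Ξ = 1 ∧ (∀ C : Set (Rn d), IsClosed C → P C = 1 → Ξ ⊆ C) ∧
  -- density of P w.r.t. Lebesgue measure
  P = volume.withDensity
    (fun z => ENNReal.ofReal (Ξ.indicator (fun z' => Real.exp (-(Q z'))) z)) ∧
  0 < α ∧ RegVary q α ∧ MultiRegVary Ξ Q q lam ∧
  (∀ z ∈ Ξ, ‖z‖ = 1 → 0 < lam z)

theorem lam_homog {d : ℕ} {Ξ : Set (Rn d)} {Q : Rn d → ℝ} {q : ℝ → ℝ} {lam : Rn d → ℝ} {α : ℝ}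
    (hcone : IsPosCone Ξ) (hq : RegVary q α) (hQ : MultiRegVary Ξ Q q lam)
    {t : ℝ} (ht : 0 < t) {z : Rn d} (hz : z ∈ Ξ) : lam (t • z) = t ^ α * lam z := by
  obtain ⟨-, -, -, hlim⟩ := hQ
  have h1 := hlim (t • z) (hcone t ht z hz) (fun _ => t • z) (fun _ _ => hcone t ht z hz)
    tendsto_const_nhds
  have h2 := hlim z hz (fun _ => z) (fun _ _ => hz) tendsto_const_nhds
  have hmul : Tendsto (fun u : ℝ => u * t) atTop atTop := tendsto_id.atTop_mul_const ht
  have h3 := (hq.2 t ht).mul (h2.comp hmul)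
  refine tendsto_nhds_unique h1 (h3.congr' ?_)
  filter_upwards [eventually_gt_atTop 0] with u hu
  have a1 := (hq.1 u hu).ne'
  have a2 := (hq.1 (u * t) (mul_pos hu ht)).ne'
  simp only [Function.comp, smul_smul]
  field_simp

theorem zero_mem_cone {d : ℕ} {Ξ : Set (Rn d)} (hne : Ξ.Nonempty) (hcl : IsClosed Ξ)
    (hcone : IsPosCone Ξ) : (0 : Rn d) ∈ Ξ := by
  obtain ⟨z, hz⟩ := hne
  have h : Tendsto (fun k : ℕ => (1 / ((k : ℝ) + 1)) • z) atTop (𝓝 ((0 : ℝ) • z)) :=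
    tendsto_one_div_add_atTop_nhds_zero_nat.smul_const z
  rw [zero_smul] at h
  exact hcl.mem_of_tendsto h (Eventually.of_forall fun k => hcone _ (by positivity) z hz)


/-- The rate function `I(y) = inf{lam(w) : w ∈ Ξ, gs(y, w) ≥ 0}` (with `inf ∅ = ⊤`
in `EReal`) is bounded away from `0` and from `+∞`, uniformly on every nonempty
compact subset of `X^∞_γ \ {0}`. -/
theorem rate_function_bounds {n m : ℕ} (P : Measure (Rn m)) (Ξ : Set (Rn m))
    (Q : Rn m → ℝ) (q : ℝ → ℝ) (lam : Rn m → ℝ) (α : ℝ)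
    (hA1 : Assumption1 P Ξ Q q lam α)
    (X : Set (Rn n)) (g : Rn n → Rn m → ℝ) (γ ρ : ℝ) (gs : Rn n → Rn m → ℝ)
    (hA2 : Assumption2 X Ξ g γ ρ gs)
    (K : Set (Rn n)) (hKne : K.Nonempty) (hKcpt : IsCompact K)
    (hKsub : K ⊆ asymCone X γ \ {0}) :
    ∃ c M : ℝ, 0 < c ∧ ∀ y ∈ K,
      (c : EReal) ≤ (⨅ w ∈ {w ∈ Ξ | 0 ≤ gs y w}, (lam w : EReal)) ∧
      (⨅ w ∈ {w ∈ Ξ | 0 ≤ gs y w}, (lam w : EReal)) ≤ (M : EReal) := by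
  obtain ⟨-, hne, hcl, hcone, -, -, -, hα, hq, hQ, hpos⟩ := hA1
  obtain ⟨-, -, -, ⟨hcont, -⟩, -, hA3, hA4, -⟩ := hA2
  have h0 := zero_mem_cone hne hcl hcone
  -- upper bound
  have hup : ∃ M : ℝ, ∀ y ∈ K, ∃ w ∈ Ξ, 0 ≤ gs y w ∧ lam w ≤ M := by
    refine hKcpt.induction_on (p := fun s => ∃ M : ℝ, ∀ y ∈ s, ∃ w ∈ Ξ, 0 ≤ gs y w ∧ lam w ≤ M)
      ⟨0, by simp⟩ ?_ ?_ ?_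
    · rintro s t hst ⟨M, hM⟩
      exact ⟨M, fun y hy => hM y (hst hy)⟩
    · rintro s t ⟨M, hM⟩ ⟨N, hN⟩
      refine ⟨max M N, ?_⟩
      rintro y (hy | hy)
      · obtain ⟨w, hw, h1, h2⟩ := hM y hy
        exact ⟨w, hw, h1, h2.trans (le_max_left _ _)⟩
      · obtain ⟨w, hw, h1, h2⟩ := hN y hy
        exact ⟨w, hw, h1, h2.trans (le_max_right _ _)⟩
    · intro y hy
      obtain ⟨w, hw, hg⟩ := hA4 y (hKsub hy)
      have hc : ContinuousOn (fun y' => gs y' w) K :=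
        hcont.comp (f := fun y' : Rn n => (y', w)) (by fun_prop)
          (fun y' hy' => ⟨(hKsub hy').1, hw⟩)
      refine ⟨_, (hc y hy).eventually (lt_mem_nhds hg), lam w, ?_⟩
      intro y' hy'
      exact ⟨w, hw, le_of_lt hy', le_rfl⟩
  -- lower bound
  have hlow : ∃ δ : ℝ, 0 < δ ∧ ∀ y ∈ K, ∀ w ∈ Ξ, ‖w‖ < δ → gs y w < 0 := by
    refine hKcpt.induction_on
      (p := fun s => ∃ δ : ℝ, 0 < δ ∧ ∀ y ∈ s, ∀ w ∈ Ξ, ‖w‖ < δ → gs y w < 0)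
      ⟨1, by simp⟩ ?_ ?_ ?_
    · rintro s t hst ⟨M, hM0, hM⟩
      exact ⟨M, hM0, fun y hy => hM y (hst hy)⟩
    · rintro s t ⟨M, hM0, hM⟩ ⟨N, hN0, hN⟩
      refine ⟨min M N, lt_min hM0 hN0, ?_⟩
      rintro y (hy | hy) w hw hlt
      · exact hM y hy w hw (hlt.trans_le (min_le_left _ _))
      · exact hN y hy w hw (hlt.trans_le (min_le_right _ _))
    · intro y hy
      have hc := (hcont (y, 0) ⟨(hKsub hy).1, h0⟩).eventually (gt_mem_nhds (hA3 y (hKsub hy)))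
      rw [eventually_iff, Metric.mem_nhdsWithin_iff] at hc
      obtain ⟨ε, hε, hsub⟩ := hc
      refine ⟨Metric.ball y ε ∩ K,
        inter_mem (mem_nhdsWithin_of_mem_nhds (Metric.ball_mem_nhds y hε)) self_mem_nhdsWithin,
        ε, hε, ?_⟩
      rintro y' ⟨hy1, hy2⟩ w hw hlt
      refine hsub (a := (y', w)) ⟨?_, (hKsub hy2).1, hw⟩
      rw [Metric.mem_ball, Prod.dist_eq]
      exact max_lt hy1 (by simpa using hlt)
  have hsph : ∃ c : ℝ, 0 < c ∧ ∀ z ∈ Ξ, ‖z‖ = 1 → c ≤ lam z := by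
    have hcpt : IsCompact (Metric.sphere (0 : Rn m) 1 ∩ Ξ) := (isCompact_sphere 0 1).inter_right hcl
    rcases (Metric.sphere (0 : Rn m) 1 ∩ Ξ).eq_empty_or_nonempty with he | hn
    · refine ⟨1, one_pos, fun z hz h1 => ?_⟩
      have : z ∈ Metric.sphere (0 : Rn m) 1 ∩ Ξ := ⟨by simpa using h1, hz⟩
      rw [he] at this
      exact this.elim
    · obtain ⟨z0, hz0, hmin⟩ := hcpt.exists_isMinOn hn (hQ.2.2.1.mono inter_subset_right)
      refine ⟨lam z0, hpos z0 hz0.2 (by simpa using hz0.1), fun z hz h1 => ?_⟩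
      exact hmin (show z ∈ Metric.sphere (0 : Rn m) 1 ∩ Ξ from ⟨by simpa using h1, hz⟩)
  obtain ⟨M, hM⟩ := hup
  obtain ⟨δ, hδ, hlow⟩ := hlow
  obtain ⟨c, hc, hsph⟩ := hsph
  refine ⟨δ ^ α * c, M, by positivity, fun y hy => ⟨?_, ?_⟩⟩
  · refine le_iInf₂ fun w hw => ?_
    obtain ⟨hw, hg⟩ := hw
    have hδw : δ ≤ ‖w‖ := by
      by_contra hlt
      exact absurd (hlow y hy w hw (not_le.mp hlt)) (not_lt.mpr hg)
    have hwpos : 0 < ‖w‖ := hδ.trans_le hδw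
    have hz := hcone ‖w‖⁻¹ (inv_pos.mpr hwpos) w hw
    have hn1 : ‖‖w‖⁻¹ • w‖ = 1 := by
      rw [norm_smul, norm_inv, norm_norm, inv_mul_cancel₀ hwpos.ne']
    have hh := lam_homog hcone hq hQ hwpos hz
    rw [smul_smul, mul_inv_cancel₀ hwpos.ne', one_smul] at hh
    rw [EReal.coe_le_coe_iff, hh]
    exact mul_le_mul (Real.rpow_le_rpow hδ.le hδw hα.le) (hsph _ hz hn1) hc.le (by positivity)
  · obtain ⟨w, hw, hg, hl⟩ := hM y hy
    exact (iInf₂_le w ⟨hw, hg⟩).trans (EReal.coe_le_coe_iff.mpr hl)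
end
end

section
/- Suppose Assumption 1 holds for the Borel probability measure P on ℝ^m with support Ξ, scale function q, directional function λ, and tail index α > 0, and Assumption 2 holds for X ⊆ ℝ^n, the same closed cone Ξ, g, exponents (γ, ρ), and limit function g*. Define I(y) := inf{λ(w) : w ∈ Ξ, g*(y, w) ≥ 0}, with inf ∅ = +∞. Let (y_u)_{u>0} ⊆ ℝ^n be a family with u^γ y_u ∈ X for all u > 0 and y_u → y₀ ∈ X^∞_γ as u → ∞. Then liminf_{u→∞} log P({z ∈ ℝ^m : g(u^γ y_u, z) > 0}) / (−q(u)) ≥ I(y₀), with the convention log 0 = −∞. -/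
open Filter Topology MeasureTheory Set

noncomputable section

/-- Uniformity on compact sets from convergence along families. -/
lemma ldp_unif {d : ℕ} {Ξ K : Set (Rn d)} (hK : IsCompact K) (hKΞ : K ⊆ Ξ)
    (R : ℝ → Rn d → Prop)
    (h : ∀ w ∈ K, ∀ wu : ℝ → Rn d, (∀ u, 0 < u → wu u ∈ Ξ) → Tendsto wu atTop (𝓝 w) →
      ∀ᶠ u in atTop, R u (wu u)) :
    ∀ᶠ u in atTop, ∀ w ∈ K, R u w := by
  classical
  by_contra hcon
  have hfr : ∃ᶠ u : ℝ in atTop, ∃ w ∈ K, ¬ R u w := by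
    intro h'
    apply hcon
    filter_upwards [h'] with u hu
    simpa using hu
  obtain ⟨us, hus, hbad⟩ := exists_seq_forall_of_frequently hfr
  have hb : ∃ b : ℝ → Rn d, ∀ u, (∃ w ∈ K, ¬ R u w) → b u ∈ K ∧ ¬ R u (b u) := by
    refine ⟨fun u => if hu : ∃ w ∈ K, ¬ R u w then hu.choose else 0, fun u hu => ?_⟩
    simp only [dif_pos hu]
    exact hu.choose_spec
  obtain ⟨b, hb⟩ := hb
  obtain ⟨w, hwK, φ, hφ, hlim⟩ := hK.tendsto_subseq (fun n => (hb _ (hbad n)).1)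
  have hv : Tendsto (us ∘ φ) atTop atTop := hus.comp hφ.tendsto_atTop
  let zu : ℝ → Rn d := fun u => if u ∈ range (us ∘ φ) then b u else w
  have hzR : ∀ n, zu (us (φ n)) = b (us (φ n)) := fun n => if_pos ⟨n, rfl⟩
  have hev := h w hwK zu (by
    intro u _
    by_cases hu : u ∈ range (us ∘ φ)
    · simp only [zu, if_pos hu]
      obtain ⟨n, rfl⟩ := hu
      exact hKΞ (hb _ (hbad _)).1
    · simp only [zu, if_neg hu]
      exact hKΞ hwK) (by
    intro V hV
    have h1 := hlim hV
    obtain ⟨N, hN⟩ := mem_atTop_sets.1 h1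
    have h2 : ∀ᶠ u : ℝ in atTop, ∀ n ∈ Finset.range N, us (φ n) < u :=
      (Finset.eventually_all _).2 fun n _ => eventually_gt_atTop _
    show ∀ᶠ u in atTop, zu u ∈ V
    filter_upwards [h2] with u hu
    by_cases hur : u ∈ range (us ∘ φ)
    · simp only [zu, if_pos hur]
      obtain ⟨n, rfl⟩ := hur
      apply hN n
      by_contra hn
      exact lt_irrefl _ (hu n (by simpa using hn))
    · simp only [zu, if_neg hur]
      exact mem_of_mem_nhds hV)
  obtain ⟨n, hn⟩ := (hv.eventually hev).exists
  simp only [Function.comp] at hn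
  rw [hzR] at hn
  exact (hb _ (hbad _)).2 hn

/-- Homogeneity of the limit function. -/
lemma ldp_homog {d : ℕ} {Ξ : Set (Rn d)} {Q : Rn d → ℝ} {q : ℝ → ℝ} {lam : Rn d → ℝ} {α : ℝ}
    (hcone : IsPosCone Ξ) (hq : RegVary q α) (hQ : MultiRegVary Ξ Q q lam)
    {c : ℝ} (hc : 0 < c) {z : Rn d} (hz : z ∈ Ξ) : lam (c • z) = c ^ α * lam z := by
  obtain ⟨_, _, _, h⟩ := hQ
  have h1 := h (c • z) (hcone c hc z hz) (fun _ => c • z) (fun _ _ => hcone c hc z hz)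
    tendsto_const_nhds
  have h2 := (h z hz (fun _ => z) (fun _ _ => hz) tendsto_const_nhds).comp
    (tendsto_id.atTop_mul_const hc)
  have h3 := (hq.2 c hc).mul h2
  refine tendsto_nhds_unique h1 (h3.congr' ?_)
  filter_upwards [eventually_gt_atTop 0] with u hu
  have a1 := (hq.1 u hu).ne'
  have a2 := (hq.1 (u * c) (mul_pos hu hc)).ne'
  simp only [Function.comp, id, smul_smul]
  field_simp

/-- Growth of `Q` under dilations. -/
lemma ldp_dil {d : ℕ} {Ξ : Set (Rn d)} {Q : Rn d → ℝ} {q : ℝ → ℝ} {lam : Rn d → ℝ} {α : ℝ}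
    (hcl : IsClosed Ξ) (hcone : IsPosCone Ξ) (hα : 0 < α)
    (hq : RegVary q α) (hQ : MultiRegVary Ξ Q q lam)
    (hpos : ∀ z ∈ Ξ, ‖z‖ = 1 → 0 < lam z) :
    ∃ K : ℝ, 1 < K ∧ ∃ u₀ : ℝ, 0 < u₀ ∧ ∀ z ∈ Ξ, u₀ ≤ ‖z‖ → 2 * Q z ≤ Q (K • z) := by
  have hK1 : (1 : ℝ) < 3 ^ (1 / α) := Real.one_lt_rpow (by norm_num) (by positivity)
  have hK0 : (0 : ℝ) < 3 ^ (1 / α) := by positivity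
  have hKα : ((3 : ℝ) ^ (1 / α)) ^ α = 3 := by
    rw [← Real.rpow_mul (by norm_num)]
    simp [hα.ne']
  set K : ℝ := 3 ^ (1 / α) with hKdef
  refine ⟨K, hK1, ?_⟩
  have hcomp : IsCompact (Ξ ∩ Metric.sphere 0 1) := (isCompact_sphere 0 1).inter_left hcl
  have hev := ldp_unif hcomp inter_subset_left
    (fun u w => 2 * Q (u • w) ≤ Q (u • K • w)) (by
      intro w hw wu hwu hlim
      have h1 := hQ.2.2.2 w hw.1 wu hwu hlim
      have h2 := hQ.2.2.2 (K • w) (hcone K hK0 w hw.1) (fun u => K • wu u)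
        (fun u hu => hcone K hK0 _ (hwu u hu)) (hlim.const_smul K)
      rw [ldp_homog hcone hq hQ hK0 hw.1, hKα] at h2
      have hl := hpos w hw.1 (by simpa using hw.2)
      have h3 := (h2.sub (h1.const_mul 2)).eventually (lt_mem_nhds (a := 0) (by linarith))
      filter_upwards [h3, eventually_gt_atTop 0] with u hu hu0
      have a1 := hq.1 u hu0
      have : Q (u • K • wu u) / q u - 2 * (Q (u • wu u) / q u)
        = (Q (u • K • wu u) - 2 * Q (u • wu u)) / q u := by ring
      rw [this, div_pos_iff_of_pos_right a1] at hu
      linarith)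
  obtain ⟨u₀, hu₀⟩ := (hev.and (eventually_gt_atTop 0)).exists_forall_of_atTop
  refine ⟨u₀, (hu₀ u₀ le_rfl).2, fun z hz hzn => ?_⟩
  obtain ⟨h1, h2⟩ := hu₀ ‖z‖ hzn
  have h3 := h1 (‖z‖⁻¹ • z) ⟨hcone _ (inv_pos.2 h2) z hz, by
    simp [norm_smul, h2.ne']⟩
  have e : ‖z‖ • ‖z‖⁻¹ • z = z := by rw [smul_smul, mul_inv_cancel₀ h2.ne', one_smul]
  rw [smul_comm ‖z‖ K, e] at h3
  exact h3

lemma ldp_dil_pow {d : ℕ} {Ξ : Set (Rn d)} {Q : Rn d → ℝ} (hcone : IsPosCone Ξ) {K u₀ : ℝ}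
    (hK : 1 < K)
    (h : ∀ z ∈ Ξ, u₀ ≤ ‖z‖ → 2 * Q z ≤ Q (K • z)) (j : ℕ) :
    ∀ z ∈ Ξ, u₀ ≤ ‖z‖ → 2 ^ j * Q z ≤ Q (K ^ j • z) := by
  have hK0 : 0 < K := by linarith
  induction j with
  | zero => intro z _ _; simp
  | succ j ih =>
    intro z hz hzn
    have h1 := ih z hz hzn
    have h2 := h (K ^ j • z) (hcone _ (pow_pos hK0 j) z hz) (by
      rw [norm_smul, Real.norm_of_nonneg (by positivity)]
      have : 1 ≤ K ^ j := one_le_pow₀ hK.le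
      nlinarith [norm_nonneg z])
    rw [smul_smul, ← pow_succ'] at h2
    rw [pow_succ]
    linarith

/-- Uniform lower bound far out. -/
lemma ldp_far {d : ℕ} {Ξ : Set (Rn d)} {Q : Rn d → ℝ} {q : ℝ → ℝ} {lam : Rn d → ℝ} {α : ℝ}
    (hcl : IsClosed Ξ) (hcone : IsPosCone Ξ)
    (hq : RegVary q α) (hQ : MultiRegVary Ξ Q q lam)
    (hpos : ∀ z ∈ Ξ, ‖z‖ = 1 → 0 < lam z) {K u₀ : ℝ}
    (hK : 1 < K) (h : ∀ z ∈ Ξ, u₀ ≤ ‖z‖ → 2 * Q z ≤ Q (K • z)) :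
    ∃ c : ℝ, 0 < c ∧ ∀ᶠ u in atTop, ∀ J : ℕ, ∀ z ∈ Ξ, K ^ J * u ≤ ‖z‖ →
      2 ^ J * (c * q u) ≤ Q z := by
  have hK0 : 0 < K := by linarith
  have hcomp : IsCompact (Ξ ∩ (Metric.closedBall 0 K \ Metric.ball 0 1)) :=
    ((isCompact_closedBall 0 K).diff Metric.isOpen_ball).inter_left hcl
  have hpos' : ∀ w ∈ Ξ ∩ (Metric.closedBall 0 K \ Metric.ball 0 1), 0 < lam w := by
    intro w hw
    have hw1 : 1 ≤ ‖w‖ := by simpa using hw.2.2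
    have hw0 : 0 < ‖w‖ := by linarith
    have hm := hcone _ (inv_pos.2 hw0) w hw.1
    have h1 := hpos _ hm (by simp [norm_smul, hw0.ne'])
    have h2 := ldp_homog hcone hq hQ hw0 hm
    rw [smul_smul, mul_inv_cancel₀ hw0.ne', one_smul] at h2
    rw [h2]
    exact mul_pos (Real.rpow_pos_of_pos hw0 _) h1
  obtain ⟨c, hc0, hc⟩ : ∃ c : ℝ, 0 < c ∧
      ∀ w ∈ Ξ ∩ (Metric.closedBall 0 K \ Metric.ball 0 1), c < lam w := by
    rcases (Ξ ∩ (Metric.closedBall (0 : Rn d) K \ Metric.ball 0 1)).eq_empty_or_nonempty with he | hne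
    · exact ⟨1, one_pos, fun w hw => by simp [he] at hw⟩
    · obtain ⟨w₀, hw₀, hmin⟩ := hcomp.exists_isMinOn hne (hQ.2.2.1.mono inter_subset_left)
      refine ⟨lam w₀ / 2, half_pos (hpos' _ hw₀), fun w hw => ?_⟩
      have := hmin hw
      have h0 := hpos' _ hw₀
      change lam w₀ ≤ lam w at this
      linarith
  refine ⟨c, hc0, ?_⟩
  have hev := ldp_unif hcomp inter_subset_left
    (fun u w => c * q u ≤ Q (u • w)) (by
      intro w hw wu hwu hlim
      have h1 := (hQ.2.2.2 w hw.1 wu hwu hlim).eventually (lt_mem_nhds (hc w hw))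
      filter_upwards [h1, eventually_gt_atTop 0] with u hu hu0
      rw [lt_div_iff₀ (hq.1 u hu0)] at hu
      exact hu.le)
  filter_upwards [hev, eventually_gt_atTop 0, eventually_ge_atTop u₀] with u hu hu0 huu J z hz hzJ
  have hKJ : 1 ≤ K ^ J := one_le_pow₀ hK.le
  have hx : 1 ≤ ‖z‖ / u := by
    rw [one_le_div hu0]; nlinarith
  obtain ⟨i, hi1, hi2⟩ := exists_nat_pow_near hx hK
  rw [le_div_iff₀ hu0] at hi1
  rw [div_lt_iff₀ hu0] at hi2
  have hJi : J ≤ i := by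
    have : K ^ J < K ^ (i + 1) := by
      have := hzJ.trans_lt hi2
      exact lt_of_mul_lt_mul_right this hu0.le
    have := (pow_lt_pow_iff_right₀ hK).1 this
    omega
  have hKi : 0 < K ^ i := pow_pos hK0 i
  have hm : (K ^ i)⁻¹ • z ∈ Ξ := hcone _ (inv_pos.2 hKi) z hz
  have hn : ‖(K ^ i)⁻¹ • z‖ = ‖z‖ / K ^ i := by
    rw [norm_smul, Real.norm_of_nonneg (by positivity)]; field_simp
  have hn1 : u ≤ ‖(K ^ i)⁻¹ • z‖ := by
    rw [hn, le_div_iff₀ hKi]; linarith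
  have hn2 : ‖(K ^ i)⁻¹ • z‖ ≤ K * u := by
    rw [hn, div_le_iff₀ hKi]; rw [pow_succ] at hi2; linarith
  have h1 := ldp_dil_pow hcone hK h i _ hm (huu.trans hn1)
  rw [smul_smul, mul_inv_cancel₀ hKi.ne', one_smul] at h1
  have hn3 : ‖u⁻¹ • (K ^ i)⁻¹ • z‖ = ‖(K ^ i)⁻¹ • z‖ / u := by
    rw [norm_smul, Real.norm_of_nonneg (by positivity)]; field_simp
  have h2 := hu (u⁻¹ • (K ^ i)⁻¹ • z) ⟨hcone _ (inv_pos.2 hu0) _ hm, by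
    rw [mem_closedBall_zero_iff, hn3, div_le_iff₀ hu0]; exact hn2, by
    rw [mem_ball_zero_iff, hn3, div_lt_one hu0]; exact not_lt.2 hn1⟩
  rw [smul_smul u, mul_inv_cancel₀ hu0.ne', one_smul] at h2
  have hqu : 0 < c * q u := mul_pos hc0 (hq.1 u hu0)
  have h3 : (2 : ℝ) ^ J ≤ 2 ^ i := pow_le_pow_right₀ (by norm_num) hJi
  have h4 : (0 : ℝ) < 2 ^ i := by positivity
  calc 2 ^ J * (c * q u) ≤ 2 ^ i * (c * q u) := by gcongr
    _ ≤ 2 ^ i * Q ((K ^ i)⁻¹ • z) := by gcongr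
    _ ≤ Q z := h1

/-- Divergence of `q` when the cone is nontrivial. -/
lemma ldp_q_top {d : ℕ} {Ξ : Set (Rn d)} {Q : Rn d → ℝ} {q : ℝ → ℝ} {lam : Rn d → ℝ} {α : ℝ}
    (hcl : IsClosed Ξ) (hcone : IsPosCone Ξ)
    (hq : RegVary q α) (hQ : MultiRegVary Ξ Q q lam)
    (hpos : ∀ z ∈ Ξ, ‖z‖ = 1 → 0 < lam z) {K u₀ : ℝ}
    (hK : 1 < K) (h : ∀ z ∈ Ξ, u₀ ≤ ‖z‖ → 2 * Q z ≤ Q (K • z))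
    {e : Rn d} (he : e ∈ Ξ) (hen : ‖e‖ = 1) : Tendsto q atTop atTop := by
  obtain ⟨c, hc, hev⟩ := ldp_far hcl hcone hq hQ hpos hK h
  obtain ⟨u, hu, hu0⟩ := (hev.and (eventually_gt_atTop 0)).exists
  have hcq : 0 < c * q u := mul_pos hc (hq.1 u hu0)
  have hle := hpos e he hen
  have h1 := (hQ.2.2.2 e he (fun _ => e) (fun _ _ => he) tendsto_const_nhds).eventually
    (gt_mem_nhds (show lam e < 2 * lam e by linarith))
  rw [tendsto_atTop]
  intro M
  obtain ⟨J, hJ⟩ := pow_unbounded_of_one_lt (2 * lam e * M / (c * q u)) (one_lt_two (α := ℝ))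
  filter_upwards [h1, eventually_ge_atTop (K ^ J * u), eventually_gt_atTop 0] with v hv hvJ hv0
  have h2 := hu J (v • e) (hcone v hv0 e he) (by
    rw [norm_smul, hen, Real.norm_of_nonneg hv0.le]; linarith)
  rw [div_lt_iff₀ hcq] at hJ
  rw [div_lt_iff₀ (hq.1 v hv0)] at hv
  have : 2 * lam e * M < 2 * lam e * q v := by linarith
  exact (lt_of_mul_lt_mul_left this (by linarith)).le

lemma ldp_integ {d : ℕ} {Ξ : Set (Rn d)} {Q : Rn d → ℝ} (hcl : IsClosed Ξ)
    (hcone : IsPosCone Ξ) (hQ0 : ∀ z ∈ Ξ, 0 ≤ Q z) {K u₀ : ℝ}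
    (hK : 1 < K) (h : ∀ z ∈ Ξ, u₀ ≤ ‖z‖ → 2 * Q z ≤ Q (K • z))
    (hfin : ∫⁻ z, ENNReal.ofReal (Ξ.indicator (fun z' => Real.exp (-(Q z'))) z) ≠ ⊤) (j : ℕ) :
    ∫⁻ z in Ξ, ENNReal.ofReal (Real.exp (-((2 ^ j)⁻¹ * Q z))) ≠ ⊤ := by
  have hK0 : 0 < K := by linarith
  have hKj : 0 < K ^ j := pow_pos hK0 j
  have hm : MeasurableSet Ξ := hcl.measurableSet
  set F : Rn d → ENNReal :=
    fun z => ENNReal.ofReal (Ξ.indicator (fun z' => Real.exp (-(Q z'))) z) with hF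
  set B : Set (Rn d) := Metric.ball 0 (K ^ j * u₀)
  have hB : MeasurableSet B := Metric.isOpen_ball.measurableSet
  have hscale : ∫⁻ z, F ((K ^ j)⁻¹ • z) ≠ ⊤ := by
    have h1 := lintegral_map_equiv (μ := (volume : Measure (Rn d))) F
      (Homeomorph.smulOfNeZero ((K ^ j)⁻¹) (inv_ne_zero hKj.ne')).toMeasurableEquiv
    have h2 := Measure.map_addHaar_smul (volume : Measure (Rn d)) (inv_ne_zero hKj.ne')
    have h3 : ∫⁻ z, F ((K ^ j)⁻¹ • z) = ∫⁻ z, F z ∂(Measure.map ((K ^ j)⁻¹ • ·) volume) := h1.symm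
    rw [h3, h2, lintegral_smul_measure]
    exact ENNReal.mul_ne_top ENNReal.ofReal_ne_top hfin
  have hle : ∫⁻ z in Ξ, ENNReal.ofReal (Real.exp (-((2 ^ j)⁻¹ * Q z)))
      ≤ ∫⁻ z in Ξ, (B.indicator 1 z + F ((K ^ j)⁻¹ • z)) := by
    apply setLIntegral_mono' hm
    intro z hz
    by_cases hzB : z ∈ B
    · have : ENNReal.ofReal (Real.exp (-((2 ^ j)⁻¹ * Q z))) ≤ 1 := by
        rw [ENNReal.ofReal_le_one, Real.exp_le_one_iff]
        have := hQ0 z hz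
        have : 0 ≤ ((2 : ℝ) ^ j)⁻¹ * Q z := by positivity
        linarith
      simp only [indicator_of_mem hzB, Pi.one_apply]
      exact this.trans le_self_add
    · have hmz := hcone _ (inv_pos.2 hKj) z hz
      have hn : K ^ j * u₀ ≤ ‖z‖ := by simpa [B] using hzB
      have h1 := ldp_dil_pow hcone hK h j _ hmz (by
        rw [norm_smul, Real.norm_of_nonneg (by positivity), ← div_eq_inv_mul, le_div_iff₀ hKj]
        linarith)
      rw [smul_smul, mul_inv_cancel₀ hKj.ne', one_smul] at h1
      refine le_trans ?_ le_add_self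
      simp only [hF, indicator_of_mem hmz]
      apply ENNReal.ofReal_le_ofReal
      apply Real.exp_le_exp.2
      have h2 : (0 : ℝ) < 2 ^ j := by positivity
      rw [neg_le_neg_iff, ← div_eq_inv_mul, le_div_iff₀ h2]
      linarith
  refine ne_top_of_le_ne_top ?_ (hle.trans (setLIntegral_le_lintegral _ _))
  rw [lintegral_add_left (measurable_one.indicator hB), lintegral_indicator_one hB]
  exact ENNReal.add_ne_top.2 ⟨measure_ball_lt_top.ne, hscale⟩

lemma ldp_vol_zero (d : ℕ) : (volume : Measure (Rn d)) {0} ≤ 1 := by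
  rw [← (EuclideanSpace.basisFun (Fin d) ℝ).volume_parallelepiped]
  apply measure_mono
  rintro _ rfl
  rw [mem_parallelepiped_iff]
  exact ⟨0, by simp, by simp⟩

/-- From a probability bound to the `EReal` inequality. -/
lemma ldp_ereal {p : ENNReal} {s r : ℝ} (hr : 0 < r)
    (h : p ≤ ENNReal.ofReal (Real.exp (-(s * r)))) :
    (s : EReal) ≤ ENNReal.log p / ((-r : ℝ) : EReal) := by
  have h1 := ENNReal.log_le_log h
  rw [ENNReal.log_ofReal_of_pos (Real.exp_pos _), Real.log_exp] at h1
  induction hl : ENNReal.log p using EReal.rec with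
  | bot =>
    rw [EReal.bot_div_of_neg_ne_bot (by exact_mod_cast neg_neg_of_pos hr) (EReal.coe_ne_bot _)]
    exact le_top
  | coe x =>
    rw [hl] at h1
    have h2 : x ≤ -(s * r) := by exact_mod_cast h1
    rw [← EReal.coe_div, EReal.coe_le_coe_iff, div_neg, ← neg_div, le_div_iff₀ hr]
    linarith
  | top =>
    rw [hl] at h1
    exact absurd h1 (not_le.2 (EReal.coe_lt_top _))

/-- Every violating scenario eventually has a large `Q`. -/
lemma ldp_Q_large {n m : ℕ} {Ξ : Set (Rn m)}
    {Q : Rn m → ℝ} {q : ℝ → ℝ} {lam : Rn m → ℝ} {α : ℝ}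
    (hcl : IsClosed Ξ) (hcone : IsPosCone Ξ)
    (hq : RegVary q α) (hQ : MultiRegVary Ξ Q q lam)
    (hpos : ∀ z ∈ Ξ, ‖z‖ = 1 → 0 < lam z) {K u₀ : ℝ}
    (hK : 1 < K) (h : ∀ z ∈ Ξ, u₀ ≤ ‖z‖ → 2 * Q z ≤ Q (K • z))
    {X : Set (Rn n)} {g : Rn n → Rn m → ℝ} {γ ρ : ℝ} {gs : Rn n → Rn m → ℝ}
    (hg : CondA1 X Ξ g γ ρ gs)
    {yu : ℝ → Rn n} {y₀ : Rn n}
    (hyuX : ∀ u : ℝ, 0 < u → (u ^ γ) • yu u ∈ X)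
    (hy₀ : y₀ ∈ asymCone X γ)
    (hyconv : Tendsto yu atTop (𝓝 y₀)) {s : ℝ}
    (hs : ∀ w ∈ Ξ, 0 ≤ gs y₀ w → s < lam w) :
    ∀ᶠ u in atTop, ∀ z ∈ Ξ, 0 < g ((u ^ γ) • yu u) z → s * q u ≤ Q z := by
  have hK0 : 0 < K := by linarith
  obtain ⟨c, hc, hfar⟩ := ldp_far hcl hcone hq hQ hpos hK h
  obtain ⟨J, hJ⟩ := pow_unbounded_of_one_lt (s / c) (one_lt_two (α := ℝ))
  rw [div_lt_iff₀ hc] at hJ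
  have hcomp : IsCompact (Ξ ∩ Metric.closedBall 0 (K ^ J)) :=
    (isCompact_closedBall 0 _).inter_left hcl
  have hev := ldp_unif hcomp inter_subset_left
    (fun u w => 0 < g ((u ^ γ) • yu u) (u • w) → s * q u ≤ Q (u • w)) (by
      intro w hw wu hwu hlim
      by_cases hgw : 0 ≤ gs y₀ w
      · have h1 := (hQ.2.2.2 w hw.1 wu hwu hlim).eventually (lt_mem_nhds (hs w hw.1 hgw))
        filter_upwards [h1, eventually_gt_atTop 0] with u hu hu0 _
        rw [lt_div_iff₀ (hq.1 u hu0)] at hu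
        exact hu.le
      · have h1 := hg.2 y₀ hy₀ w hw.1 (fun u => (u ^ γ) • yu u) (fun u => u • wu u) hyuX
          (fun u hu => hcone u hu _ (hwu u hu))
          (hyconv.congr' (by
            filter_upwards [eventually_gt_atTop 0] with u hu
            rw [smul_smul, inv_mul_cancel₀ (Real.rpow_pos_of_pos hu _).ne', one_smul]))
          (hlim.congr' (by
            filter_upwards [eventually_gt_atTop 0] with u hu
            rw [smul_smul, inv_mul_cancel₀ hu.ne', one_smul]))
        filter_upwards [h1.eventually (gt_mem_nhds (not_le.1 hgw)), eventually_gt_atTop 0]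
          with u hu hu0 hgu
        exact absurd hu (not_lt.2 (div_nonneg hgu.le (Real.rpow_pos_of_pos hu0 _).le)))
  filter_upwards [hev, hfar, eventually_gt_atTop 0] with u h1 h2 hu0 z hz hgz
  rcases le_total (K ^ J * u) ‖z‖ with hle | hle
  · have h3 := h2 J z hz hle
    have := mul_le_mul_of_nonneg_right hJ.le (hq.1 u hu0).le
    linarith
  · have e : u • u⁻¹ • z = z := by rw [smul_smul, mul_inv_cancel₀ hu0.ne', one_smul]
    have h3 := h1 (u⁻¹ • z) ⟨hcone _ (inv_pos.2 hu0) z hz, by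
      rw [mem_closedBall_zero_iff, norm_smul, Real.norm_of_nonneg (by positivity),
        ← div_eq_inv_mul, div_le_iff₀ hu0]
      exact hle⟩
    rw [e] at h3
    exact h3 hgz

/-- The exponential probability bound. -/
lemma ldp_prob {n m : ℕ} (P : Measure (Rn m)) (Ξ : Set (Rn m))
    (Q : Rn m → ℝ) (q : ℝ → ℝ) (lam : Rn m → ℝ) (α : ℝ)
    (hA1 : Assumption1 P Ξ Q q lam α)
    (X : Set (Rn n)) (g : Rn n → Rn m → ℝ) (γ ρ : ℝ) (gs : Rn n → Rn m → ℝ)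
    (hA2 : Assumption2 X Ξ g γ ρ gs)
    (yu : ℝ → Rn n) (y₀ : Rn n)
    (hyuX : ∀ u : ℝ, 0 < u → (u ^ γ) • yu u ∈ X)
    (hy₀ : y₀ ∈ asymCone X γ)
    (hyconv : Tendsto yu atTop (𝓝 y₀)) {s s' : ℝ} (hs0 : 0 < s) (hss : s < s')
    (hs : ∀ w ∈ Ξ, 0 ≤ gs y₀ w → s' < lam w) :
    ∀ᶠ u in atTop, P {z : Rn m | 0 < g ((u ^ γ) • yu u) z} ≤
      ENNReal.ofReal (Real.exp (-(s * q u))) := by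
  obtain ⟨hprob, _, hcl, hcone, hPΞ, _, hP, hα, hq, hQ, hpos⟩ := hA1
  obtain ⟨⟨_, _, _, _, _, _, _, _, hgc⟩, _, _, hg, _⟩ := hA2
  obtain ⟨K, hK, u₀, hu₀, h⟩ := ldp_dil hcl hcone hα hq hQ hpos
  have hlarge := ldp_Q_large hcl hcone hq hQ hpos hK h hg hyuX hy₀ hyconv hs
  have hm : MeasurableSet Ξ := hcl.measurableSet
  have hcompl : P Ξᶜ = 0 := (prob_compl_eq_zero_iff hm).2 hPΞ
  have hinter : ∀ A : Set (Rn m), P A ≤ P (Ξ ∩ A) := by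
    intro A
    calc P A ≤ P (Ξ ∩ A ∪ Ξᶜ) := by
          apply measure_mono
          intro z hz
          by_cases hzΞ : z ∈ Ξ
          · exact Or.inl ⟨hzΞ, hz⟩
          · exact Or.inr hzΞ
      _ ≤ P (Ξ ∩ A) + P Ξᶜ := measure_union_le _ _
      _ = P (Ξ ∩ A) := by rw [hcompl, add_zero]
  have hfin : ∫⁻ z, ENNReal.ofReal (Ξ.indicator (fun z' => Real.exp (-(Q z'))) z) ≠ ⊤ := by
    rw [← setLIntegral_univ, ← withDensity_apply _ MeasurableSet.univ, ← hP]
    exact measure_ne_top P _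
  by_cases hex : ∃ e ∈ Ξ, ‖e‖ = 1
  · obtain ⟨e, he, hen⟩ := hex
    have hqt := ldp_q_top hcl hcone hq hQ hpos hK h he hen
    obtain ⟨j, hj⟩ := pow_unbounded_of_one_lt (s' / (s' - s)) (one_lt_two (α := ℝ))
    have h2j : (0 : ℝ) < 2 ^ j := by positivity
    set ε : ℝ := (2 ^ j)⁻¹ with hε
    have hε0 : 0 < ε := by positivity
    have hε1 : ε ≤ 1 := inv_le_one_of_one_le₀ (one_le_pow₀ (by norm_num))
    have hεs : 0 < (1 - ε) * s' - s := by
      rw [div_lt_iff₀ (by linarith)] at hj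
      have : ε * s' < ε * (2 ^ j * (s' - s)) := mul_lt_mul_of_pos_left hj hε0
      rw [← mul_assoc, hε, inv_mul_cancel₀ h2j.ne', one_mul] at this
      rw [← hε] at this
      linarith
    have hI := ldp_integ hcl hcone hQ.1 hK h hfin j
    set C := ∫⁻ z in Ξ, ENNReal.ofReal (Real.exp (-((2 ^ j)⁻¹ * Q z))) with hC
    have hCe : ∀ᶠ u in atTop, C ≤ ENNReal.ofReal (Real.exp (((1 - ε) * s' - s) * q u)) := by
      have ht : Tendsto (fun u => ENNReal.ofReal (Real.exp (((1 - ε) * s' - s) * q u)))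
          atTop (𝓝 ⊤) :=
        ENNReal.tendsto_ofReal_atTop.comp
          (Real.tendsto_exp_atTop.comp (hqt.const_mul_atTop hεs))
      exact (ht.eventually (lt_mem_nhds hI.lt_top)).mono fun _ h => h.le
    filter_upwards [hlarge, hCe, eventually_gt_atTop 0] with u hu hCu hu0
    set A : Set (Rn m) := {z : Rn m | 0 < g ((u ^ γ) • yu u) z} with hA
    have hAm : MeasurableSet (Ξ ∩ A) := by
      obtain ⟨O, hO, hOe⟩ := (continuousOn_iff'.1 (hgc _ (hyuX u hu0))) (Ioi 0) isOpen_Ioi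
      have : Ξ ∩ A = O ∩ Ξ := by
        rw [← hOe, inter_comm]; rfl
      rw [this]
      exact hO.measurableSet.inter hm
    calc P A ≤ P (Ξ ∩ A) := hinter A
      _ = ∫⁻ z in Ξ ∩ A, ENNReal.ofReal (Ξ.indicator (fun z' => Real.exp (-(Q z'))) z) := by
          conv_lhs => rw [hP]
          exact withDensity_apply _ hAm
      _ ≤ ∫⁻ z in Ξ ∩ A, ENNReal.ofReal (Real.exp (-((1 - ε) * s' * q u))) *
            ENNReal.ofReal (Real.exp (-((2 ^ j)⁻¹ * Q z))) := by
          apply setLIntegral_mono' hAm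
          intro z hz
          rw [indicator_of_mem hz.1, ← ENNReal.ofReal_mul (Real.exp_pos _).le, ← Real.exp_add]
          apply ENNReal.ofReal_le_ofReal
          apply Real.exp_le_exp.2
          have h1 := mul_le_mul_of_nonneg_left (hu z hz.1 hz.2) (sub_nonneg.2 hε1)
          rw [← hε]
          linarith
      _ ≤ ∫⁻ z in Ξ, ENNReal.ofReal (Real.exp (-((1 - ε) * s' * q u))) *
            ENNReal.ofReal (Real.exp (-((2 ^ j)⁻¹ * Q z))) :=
          lintegral_mono_set inter_subset_left
      _ = ENNReal.ofReal (Real.exp (-((1 - ε) * s' * q u))) * C :=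
          lintegral_const_mul' _ _ ENNReal.ofReal_ne_top
      _ ≤ ENNReal.ofReal (Real.exp (-((1 - ε) * s' * q u))) *
            ENNReal.ofReal (Real.exp (((1 - ε) * s' - s) * q u)) := by gcongr
      _ = ENNReal.ofReal (Real.exp (-(s * q u))) := by
          rw [← ENNReal.ofReal_mul (Real.exp_pos _).le, ← Real.exp_add]
          congr 2
          ring
  · have hΞ0 : Ξ ⊆ {0} := by
      intro z hz
      by_contra hz0
      have hzn : 0 < ‖z‖ := norm_pos_iff.2 hz0
      exact hex ⟨‖z‖⁻¹ • z, hcone _ (inv_pos.2 hzn) z hz, by simp [norm_smul, hzn.ne']⟩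
    have hQ00 : ∀ z ∈ Ξ, Q z ≤ 0 := by
      intro z hz
      by_contra hQz
      push Not at hQz
      have h1 : P Ξ ≤ ENNReal.ofReal (Real.exp (-(Q z))) := by
        calc P Ξ = ∫⁻ z in Ξ, ENNReal.ofReal (Ξ.indicator (fun z' => Real.exp (-(Q z'))) z) := by
              conv_lhs => rw [hP]
              exact withDensity_apply _ hm
          _ ≤ ∫⁻ _ in Ξ, ENNReal.ofReal (Real.exp (-(Q z))) := by
              apply setLIntegral_mono' hm
              intro x hx
              have : x = z := (hΞ0 hx).trans (hΞ0 hz).symm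
              rw [this, indicator_of_mem hz]
          _ = ENNReal.ofReal (Real.exp (-(Q z))) * volume Ξ := setLIntegral_const _ _
          _ ≤ ENNReal.ofReal (Real.exp (-(Q z))) * 1 := by
              gcongr
              exact (measure_mono hΞ0).trans (ldp_vol_zero m)
          _ = _ := mul_one _
      rw [hPΞ, ENNReal.one_le_ofReal, Real.one_le_exp_iff] at h1
      linarith
    filter_upwards [hlarge, eventually_gt_atTop 0] with u hu hu0
    refine (hinter _).trans ?_
    have : Ξ ∩ {z : Rn m | 0 < g ((u ^ γ) • yu u) z} = ∅ := by
      rw [eq_empty_iff_forall_notMem]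
      intro z hz
      have h1 := hu z hz.1 hz.2
      have h2 := hQ00 z hz.1
      have := mul_pos (hs0.trans hss) (hq.1 u hu0)
      linarith
    rw [this, measure_empty]
    exact zero_le

/-- LDP lower bound for the violation probability: along any family
`(y_u)` with `u^γ y_u ∈ X` and `y_u → y₀ ∈ X^∞_γ`,
`liminf_{u→∞} log P(g(u^γ y_u, ·) > 0) / (−q(u)) ≥ I(y₀)`,
where `I(y) = inf{lam(w) : w ∈ Ξ, gs(y, w) ≥ 0}` (with `inf ∅ = ⊤`, `log 0 = ⊥`). -/
theorem ldp_violation_lower {n m : ℕ} (P : Measure (Rn m)) (Ξ : Set (Rn m))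
    (Q : Rn m → ℝ) (q : ℝ → ℝ) (lam : Rn m → ℝ) (α : ℝ)
    (hA1 : Assumption1 P Ξ Q q lam α)
    (X : Set (Rn n)) (g : Rn n → Rn m → ℝ) (γ ρ : ℝ) (gs : Rn n → Rn m → ℝ)
    (hA2 : Assumption2 X Ξ g γ ρ gs)
    (yu : ℝ → Rn n) (y₀ : Rn n)
    (hyuX : ∀ u : ℝ, 0 < u → (u ^ γ) • yu u ∈ X)
    (hy₀ : y₀ ∈ asymCone X γ)
    (hyconv : Tendsto yu atTop (𝓝 y₀)) :
    (⨅ w ∈ {w ∈ Ξ | 0 ≤ gs y₀ w}, (lam w : EReal)) ≤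
      Filter.liminf
        (fun u : ℝ =>
          ENNReal.log (P {z : Rn m | 0 < g ((u ^ γ) • yu u) z}) /
            ((-(q u) : ℝ) : EReal))
        atTop := by
  rw [← EReal.ge_of_forall_gt_iff_ge]
  intro s hs
  have hq := hA1.2.2.2.2.2.2.2.2.1
  have hprob := hA1.1
  refine Filter.le_liminf_of_le (by isBoundedDefault) ?_
  rcases le_or_gt s 0 with hs0 | hs0
  · filter_upwards [eventually_gt_atTop 0] with u hu
    apply ldp_ereal (hq.1 u hu)
    refine prob_le_one.trans ?_
    rw [ENNReal.one_le_ofReal, Real.one_le_exp_iff]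
    have := mul_nonneg (neg_nonneg.2 hs0) (hq.1 u hu).le
    linarith
  · obtain ⟨s', h1, h2⟩ := EReal.lt_iff_exists_real_btwn.1 hs
    have h1' : s < s' := by exact_mod_cast h1
    have hlam : ∀ w ∈ Ξ, 0 ≤ gs y₀ w → s' < lam w := by
      intro w hw hgw
      have h3 : (⨅ w ∈ {w ∈ Ξ | 0 ≤ gs y₀ w}, (lam w : EReal)) ≤ lam w :=
        iInf₂_le w ⟨hw, hgw⟩
      exact_mod_cast h2.trans_le h3
    filter_upwards [ldp_prob P Ξ Q q lam α hA1 X g γ ρ gs hA2 yu y₀ hyuX hy₀ hyconv hs0 h1' hlam,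
      eventually_gt_atTop 0] with u hu hu0
    exact ldp_ereal (hq.1 u hu0) hu
end
end

section
/- Suppose Assumption 1 holds for the Borel probability measure P on ℝ^m with support Ξ, scale function q, directional function λ, and tail index α > 0, and Assumption 2 holds for X ⊆ ℝ^n, the same closed cone Ξ, g, exponents (γ, ρ), and limit function g*. Define I(y) := inf{λ(w) : w ∈ Ξ, g*(y, w) ≥ 0}, with inf ∅ = +∞. Let (y_u)_{u>0} ⊆ ℝ^n be a family with u^γ y_u ∈ X for all u > 0 and y_u → y₀ ∈ X^∞_γ as u → ∞. Then limsup_{u→∞} log P({z ∈ ℝ^m : g(u^γ y_u, z) > 0}) / (−q(u)) ≤ I(y₀), with the convention log 0 = −∞. -/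
open Filter Topology MeasureTheory Set

noncomputable section

/-- Uniformity from families. -/
lemma unif_of_families {d : ℕ} {Z : Set (Rn d)} {w0 : Rn d} (hw0 : w0 ∈ Z)
    (p : ℝ → Rn d → Prop)
    (h : ∀ W : ℝ → Rn d, (∀ u, W u ∈ Z) → Tendsto W atTop (𝓝 w0) → ∀ᶠ u in atTop, p u (W u)) :
    ∃ δ > 0, ∃ U : ℝ, ∀ u ≥ U, ∀ w ∈ Z, dist w w0 < δ → p u w := by
  by_contra hcon
  push Not at hcon
  have h1 : ∀ k : ℕ, ∃ u : ℝ, (k : ℝ) ≤ u ∧ ∃ w ∈ Z, dist w w0 < 1 / ((k : ℝ) + 1) ∧ ¬ p u w := by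
    intro k
    obtain ⟨u, hu, w, hw⟩ := hcon (1 / ((k : ℝ) + 1)) (by positivity) k
    exact ⟨u, hu, w, hw⟩
  choose u hu w hwZ hwd hwp using h1
  have hut : Tendsto u atTop atTop := tendsto_atTop_mono hu tendsto_natCast_atTop_atTop
  obtain ⟨φ, hφ, hmono⟩ := strictMono_subseq_of_tendsto_atTop hut
  have hinj := hmono.injective
  let W : ℝ → Rn d := Function.extend (u ∘ φ) (w ∘ φ) (fun _ => w0)
  have hWk : ∀ k, W (u (φ k)) = w (φ k) := fun k => hinj.extend_apply (w ∘ φ) (fun _ => w0) k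
  have hWo : ∀ v, (¬ ∃ k, (u ∘ φ) k = v) → W v = w0 := fun v hv =>
    Function.extend_apply' (w ∘ φ) (fun _ => w0) v hv
  have hev := h W ?_ ?_
  · have := (hut.comp hφ.tendsto_atTop).eventually hev
    obtain ⟨k, hk⟩ := this.exists
    simp only [Function.comp] at hk
    rw [hWk] at hk
    exact hwp _ hk
  · intro v
    by_cases hv : ∃ k, (u ∘ φ) k = v
    · obtain ⟨k, rfl⟩ := hv
      simp only [Function.comp]
      rw [hWk]
      exact hwZ _
    · rw [hWo v hv]; exact hw0
  · rw [Metric.tendsto_atTop]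
    intro ε hε
    obtain ⟨K, hK⟩ := exists_nat_one_div_lt hε
    refine ⟨u (φ K), fun v hv => ?_⟩
    by_cases hv' : ∃ k, (u ∘ φ) k = v
    · obtain ⟨k, rfl⟩ := hv'
      have hKk : K ≤ k := hmono.le_iff_le.1 hv
      simp only [Function.comp]
      rw [hWk]
      refine (hwd _).trans (lt_of_le_of_lt ?_ hK)
      have h2 : (K : ℝ) ≤ (φ k : ℝ) := by exact_mod_cast hKk.trans (hφ.id_le k)
      gcongr
    · rw [hWo v hv']; simpa using hε

lemma cone_zero {d : ℕ} {Z : Set (Rn d)} (hne : Z.Nonempty) (hc : IsClosed Z)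
    (hcone : IsPosCone Z) : (0 : Rn d) ∈ Z := by
  obtain ⟨z, hz⟩ := hne
  have h : Tendsto (fun k : ℕ => (1 / ((k : ℝ) + 1)) • z) atTop (𝓝 ((0 : ℝ) • z)) :=
    tendsto_one_div_add_atTop_nhds_zero_nat.smul_const z
  rw [zero_smul] at h
  exact hc.mem_of_tendsto h (Eventually.of_forall fun k => hcone _ (by positivity) _ hz)

/-- `q → ∞`. -/
lemma q_tendsto {d : ℕ} {Ξ : Set (Rn d)} {Q : Rn d → ℝ} {q : ℝ → ℝ} {lam : Rn d → ℝ} {α : ℝ}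
    (hcone : IsPosCone Ξ) (hα : 0 < α) (hq : RegVary q α) (hQ : MultiRegVary Ξ Q q lam)
    {z : Rn d} (hz : z ∈ Ξ) (hz1 : ‖z‖ = 1) (hL : 0 < lam z) : Tendsto q atTop atTop := by
  obtain ⟨hqpos, hqlim⟩ := hq
  obtain ⟨-, -, -, hQlim⟩ := hQ
  set L := lam z with hLdef
  obtain ⟨δ, hδ, U, hU⟩ := unif_of_families hz
    (fun u w => L / 2 < Q (u • w) / q u ∧ Q (u • w) / q u < 2 * L) (by
      intro W hW hWt
      have := hQlim z hz W (fun u _ => hW u) hWt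
      exact (this.eventually (lt_mem_nhds (by linarith))).and
        (this.eventually (gt_mem_nhds (by linarith))))
  set s : ℝ := 1 + δ / 2 with hs
  have hs1 : 1 < s := by linarith
  set β : ℝ := (1 + s ^ α) / 2 with hβ
  have hsα : 1 < s ^ α := Real.one_lt_rpow hs1 hα
  have hβ1 : 1 < β := by linarith
  have hstep := (hqlim s (by linarith)).eventually (lt_mem_nhds (show β < s ^ α by linarith))
  obtain ⟨V, hV⟩ := eventually_atTop.1 hstep
  set U₀ := max (max U V) 1 with hU₀
  have hU0U : U ≤ U₀ := (le_max_left _ _).trans (le_max_left _ _)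
  have hU0V : V ≤ U₀ := (le_max_right _ _).trans (le_max_left _ _)
  have hU01 : 1 ≤ U₀ := le_max_right _ _
  -- quarter bound
  have hquart : ∀ c, 1 ≤ c → c ≤ s → q U₀ / 4 ≤ q (U₀ * c) := by
    intro c hc1 hcs
    have hcz : c • z ∈ Ξ := hcone c (by linarith) z hz
    have hd : dist (c • z) z < δ := by
      have : c • z - z = (c - 1) • z := by rw [sub_smul, one_smul]
      rw [dist_eq_norm, this, norm_smul, hz1, Real.norm_eq_abs, abs_of_nonneg (by linarith)]
      linarith
    have h1 := (hU U₀ hU0U _ hcz hd).1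
    have hUc : U ≤ U₀ * c := by nlinarith
    have h2 := (hU (U₀ * c) hUc z hz (by simpa using hδ)).2
    rw [← smul_smul] at h2
    have p1 := hqpos U₀ (by linarith)
    have p2 := hqpos (U₀ * c) (by nlinarith)
    rw [lt_div_iff₀ p1] at h1
    rw [div_lt_iff₀ p2] at h2
    nlinarith
  have hpow : ∀ k : ℕ, ∀ v, U₀ ≤ v → β ^ k * q v ≤ q (v * s ^ k) := by
    intro k
    induction k with
    | zero => intro v _; simp
    | succ k ih =>
      intro v hv
      have hvs : U₀ ≤ v * s ^ k := by
        have : 1 ≤ s ^ k := one_le_pow₀ hs1.le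
        nlinarith
      have h1 := ih v hv
      have h2 := hV (v * s ^ k) (hU0V.trans hvs)
      rw [lt_div_iff₀ (hqpos _ (by linarith))] at h2
      have : v * s ^ (k + 1) = v * s ^ k * s := by ring
      rw [this, pow_succ]
      nlinarith
  rw [tendsto_atTop]
  intro M
  have hqU := hqpos U₀ (by linarith)
  obtain ⟨K, hK⟩ := pow_unbounded_of_one_lt (4 * M / q U₀) hβ1
  rw [div_lt_iff₀ hqU] at hK
  filter_upwards [eventually_ge_atTop (U₀ * s ^ K)] with u hu
  have hsK : 1 ≤ s ^ K := one_le_pow₀ hs1.le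
  have hratio : s ^ K ≤ u / U₀ := by
    rw [le_div_iff₀ (by linarith)]; linarith
  obtain ⟨k, hk1, hk2⟩ := exists_nat_pow_near (hsK.trans hratio) hs1
  have hKk : K ≤ k := by
    have : s ^ K < s ^ (k + 1) := lt_of_le_of_lt hratio hk2
    have := (pow_lt_pow_iff_right₀ hs1).1 this
    omega
  have hsk : 0 < s ^ k := by positivity
  set c := u / U₀ / s ^ k with hc
  have hc1 : 1 ≤ c := by rw [hc, le_div_iff₀ hsk]; linarith
  have hcs : c ≤ s := by rw [hc, div_le_iff₀ hsk]; rw [pow_succ] at hk2; linarith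
  have hueq : u = U₀ * c * s ^ k := by
    rw [hc]; field_simp
  have h3 := hpow k (U₀ * c) (by nlinarith)
  rw [← hueq] at h3
  have h4 := hquart c hc1 hcs
  have h5 : β ^ K ≤ β ^ k := pow_le_pow_right₀ hβ1.le hKk
  have h6 : 0 < β ^ K := by positivity
  nlinarith [mul_le_mul h5 h4 (by linarith) (by linarith)]

/-- Full families for points of the asymptotic cone. -/
lemma asym_family {n : ℕ} {X : Set (Rn n)} {γ : ℝ} (hne : X.Nonempty) (hcl : IsClosed X)
    (hconv : Convex ℝ X) (hγ : γ ≠ 0) {y : Rn n} (hy : y ∈ asymCone X γ) :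
    ∃ x : ℝ → Rn n, (∀ u : ℝ, 0 < u → x u ∈ X) ∧
      Tendsto (fun u : ℝ => (u ^ γ)⁻¹ • x u) atTop (𝓝 y) := by
  obtain ⟨a, l, haX, hl0, hlt, hat⟩ := hy
  rcases lt_or_gt_of_ne hγ with hneg | hpos
  · have hlγ : Tendsto (fun k => l k ^ γ) atTop (𝓝 0) := by
      have := (tendsto_rpow_neg_atTop (neg_pos.2 hneg)).comp hlt
      simpa [Function.comp_def] using this
    have h0 : (0 : Rn n) ∈ X := by
      have h := hlγ.smul hat
      rw [zero_smul] at h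
      refine hcl.mem_of_tendsto h (Eventually.of_forall fun k => ?_)
      have : l k ^ γ ≠ 0 := (Real.rpow_pos_of_pos (hl0 k) _).ne'
      rw [smul_inv_smul₀ this]
      exact haX k
    have hch : ∀ u : ℝ, ∃ x ∈ X, Metric.infDist (u ^ γ • y) X = dist (u ^ γ • y) x :=
      fun u => hcl.exists_infDist_eq_dist hne _
    choose x hxX hxd using hch
    refine ⟨x, fun u _ => hxX u, ?_⟩
    rw [Metric.tendsto_atTop]
    intro ε hε
    obtain ⟨k, hk⟩ := (hat.eventually (Metric.ball_mem_nhds y hε)).exists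
    refine ⟨l k, fun u hu => lt_of_le_of_lt ?_ hk⟩
    have hu0 : 0 < u := (hl0 k).trans_le hu
    have huγ : 0 < u ^ γ := Real.rpow_pos_of_pos hu0 _
    have hlγ' : 0 < l k ^ γ := Real.rpow_pos_of_pos (hl0 k) _
    have hle : u ^ γ ≤ l k ^ γ := Real.rpow_le_rpow_of_nonpos (hl0 k) hu hneg.le
    have hmem : (u ^ γ / l k ^ γ) • a k ∈ X :=
      hconv.smul_mem_of_zero_mem h0 (haX k) ⟨by positivity, by rw [div_le_one hlγ']; exact hle⟩
    have hd : dist (x u) (u ^ γ • y) ≤ dist ((u ^ γ / l k ^ γ) • a k) (u ^ γ • y) := by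
      rw [dist_comm, ← hxd u, dist_comm]
      exact Metric.infDist_le_dist_of_mem hmem
    have e1 : dist ((u ^ γ)⁻¹ • x u) y = (u ^ γ)⁻¹ * dist (x u) (u ^ γ • y) := by
      have := dist_smul₀ (u ^ γ)⁻¹ (x u) (u ^ γ • y)
      rwa [inv_smul_smul₀ huγ.ne', Real.norm_of_nonneg (by positivity)] at this
    have e2 : dist ((u ^ γ / l k ^ γ) • a k) (u ^ γ • y)
        = u ^ γ * dist ((l k ^ γ)⁻¹ • a k) y := by
      have := dist_smul₀ (u ^ γ) ((l k ^ γ)⁻¹ • a k) y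
      rwa [smul_smul, ← div_eq_mul_inv, Real.norm_of_nonneg (by positivity)] at this
    rw [e1]
    rw [e2] at hd
    calc (u ^ γ)⁻¹ * dist (x u) (u ^ γ • y)
        ≤ (u ^ γ)⁻¹ * (u ^ γ * dist ((l k ^ γ)⁻¹ • a k) y) := by gcongr
      _ = _ := by field_simp
  · obtain ⟨x0, hx0⟩ := hne
    have hlγ : Tendsto (fun k => (l k ^ γ)⁻¹) atTop (𝓝 0) :=
      tendsto_inv_atTop_zero.comp ((tendsto_rpow_atTop hpos).comp hlt)
    have hrec : ∀ s : ℝ, 0 ≤ s → x0 + s • y ∈ X := by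
      intro s hs
      have h1 : Tendsto (fun k => (1 - s * (l k ^ γ)⁻¹) • x0 + s • ((l k ^ γ)⁻¹ • a k)) atTop
          (𝓝 ((1 - s * 0) • x0 + s • y)) :=
        ((tendsto_const_nhds.sub (hlγ.const_mul s)).smul_const x0).add (hat.const_smul s)
      rw [mul_zero, sub_zero, one_smul] at h1
      have h2 := (hlγ.const_mul s).eventually (gt_mem_nhds (show s * 0 < 1 by simp))
      refine hcl.mem_of_tendsto h1 (h2.mono fun k hk => ?_)
      rw [smul_smul]
      refine hconv hx0 (haX k) (by linarith) ?_ (by ring)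
      have := Real.rpow_pos_of_pos (hl0 k) γ
      positivity
    refine ⟨fun u => x0 + u ^ γ • y, fun u hu => hrec _ (Real.rpow_pos_of_pos hu _).le, ?_⟩
    have h3 : Tendsto (fun u : ℝ => (u ^ γ)⁻¹ • x0 + y) atTop (𝓝 ((0 : ℝ) • x0 + y)) :=
      ((tendsto_inv_atTop_zero.comp (tendsto_rpow_atTop hpos)).smul_const x0).add_const y
    rw [zero_smul, zero_add] at h3
    refine h3.congr' ?_
    filter_upwards [eventually_gt_atTop 0] with u hu
    have := (Real.rpow_pos_of_pos hu γ).ne'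
    rw [smul_add, inv_smul_smul₀ this]

lemma asym_of_family {n : ℕ} {X : Set (Rn n)} {γ : ℝ} {y : Rn n} (x : ℝ → Rn n)
    (hx : ∀ u : ℝ, 0 < u → x u ∈ X)
    (ht : Tendsto (fun u : ℝ => (u ^ γ)⁻¹ • x u) atTop (𝓝 y)) : y ∈ asymCone X γ := by
  have hk : Tendsto (fun k : ℕ => (k : ℝ) + 1) atTop atTop :=
    tendsto_atTop_add_const_right _ _ tendsto_natCast_atTop_atTop
  exact ⟨fun k => x ((k : ℝ) + 1), fun k => (k : ℝ) + 1, fun k => hx _ (by positivity),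
    fun k => by positivity, hk, ht.comp hk⟩

/-- scaling a family -/
lemma family_scale {n : ℕ} {γ : ℝ} {y : Rn n} {x : ℝ → Rn n}
    (ht : Tendsto (fun u : ℝ => (u ^ γ)⁻¹ • x u) atTop (𝓝 y)) {t : ℝ} (ht0 : 0 < t) :
    Tendsto (fun u : ℝ => (u ^ γ)⁻¹ • x (t * u)) atTop (𝓝 (t ^ γ • y)) := by
  have h1 : Tendsto (fun u : ℝ => t * u) atTop atTop := tendsto_id.const_mul_atTop ht0
  refine ((ht.comp h1).const_smul (t ^ γ)).congr' ?_
  filter_upwards [eventually_gt_atTop 0] with u hu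
  have := (Real.rpow_pos_of_pos hu γ).ne'
  have := (Real.rpow_pos_of_pos ht0 γ).ne'
  simp only [Function.comp]
  rw [smul_smul, Real.mul_rpow ht0.le hu.le]
  congr 1
  field_simp

lemma asym_scale {n : ℕ} {X : Set (Rn n)} {γ : ℝ} (hne : X.Nonempty) (hcl : IsClosed X)
    (hconv : Convex ℝ X) (hγ : γ ≠ 0) {y : Rn n} (hy : y ∈ asymCone X γ) {t : ℝ} (ht0 : 0 < t) :
    t ^ γ • y ∈ asymCone X γ := by
  obtain ⟨x, hx, ht⟩ := asym_family hne hcl hconv hγ hy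
  exact asym_of_family (fun u => x (t * u)) (fun u hu => hx _ (by positivity)) (family_scale ht ht0)

lemma gs_homog {n m : ℕ} {X : Set (Rn n)} {Ξ : Set (Rn m)} {g : Rn n → Rn m → ℝ}
    {γ ρ : ℝ} {gs : Rn n → Rn m → ℝ} (hne : X.Nonempty) (hcl : IsClosed X)
    (hconv : Convex ℝ X) (hγ : γ ≠ 0) (hcone : IsPosCone Ξ) (hA : CondA1 X Ξ g γ ρ gs)
    {y : Rn n} (hy : y ∈ asymCone X γ) {w : Rn m} (hw : w ∈ Ξ) {t : ℝ} (ht0 : 0 < t) :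
    gs (t ^ γ • y) (t • w) = t ^ ρ * gs y w := by
  obtain ⟨x, hx, ht⟩ := asym_family hne hcl hconv hγ hy
  have h1 : Tendsto (fun u : ℝ => t * u) atTop atTop := tendsto_id.const_mul_atTop ht0
  have hA' := hA.2 (t ^ γ • y) (asym_scale hne hcl hconv hγ hy ht0) (t • w) (hcone t ht0 w hw)
    (fun u => x (t * u)) (fun u => (t * u) • w) (fun u hu => hx _ (by positivity))
    (fun u hu => hcone _ (by positivity) _ hw) (family_scale ht ht0) (by
      refine tendsto_const_nhds.congr' ?_
      filter_upwards [eventually_gt_atTop 0] with u hu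
      rw [smul_smul]; congr 1; field_simp)
  have hB := (hA.2 y hy w hw x (fun u => u • w) hx (fun u hu => hcone _ hu _ hw) ht (by
      refine tendsto_const_nhds.congr' ?_
      filter_upwards [eventually_gt_atTop 0] with u hu
      rw [inv_smul_smul₀ hu.ne']))
  refine tendsto_nhds_unique hA' (((hB.comp h1).const_mul (t ^ ρ)).congr' ?_)
  filter_upwards [eventually_gt_atTop 0] with u hu
  have := (Real.rpow_pos_of_pos hu ρ).ne'
  have := (Real.rpow_pos_of_pos ht0 ρ).ne'
  simp only [Function.comp]
  rw [Real.mul_rpow ht0.le hu.le]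
  field_simp

lemma gs_convex {n m : ℕ} {X : Set (Rn n)} {Ξ : Set (Rn m)} {g : Rn n → Rn m → ℝ}
    {γ ρ : ℝ} {gs : Rn n → Rn m → ℝ} (hne : X.Nonempty) (hcl : IsClosed X)
    (hconv : Convex ℝ X) (hγ : γ ≠ 0) (hcone : IsPosCone Ξ) (hA : CondA1 X Ξ g γ ρ gs)
    (hgc : ∀ z ∈ Ξ, ConvexOn ℝ X (fun x => g x z))
    {y₁ y₂ : Rn n} (hy₁ : y₁ ∈ asymCone X γ) (hy₂ : y₂ ∈ asymCone X γ)
    {w : Rn m} (hw : w ∈ Ξ) {a b : ℝ} (ha : 0 ≤ a) (hb : 0 ≤ b) (hab : a + b = 1) :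
    gs (a • y₁ + b • y₂) w ≤ a * gs y₁ w + b * gs y₂ w := by
  obtain ⟨x, hx, ht⟩ := asym_family hne hcl hconv hγ hy₁
  obtain ⟨x', hx', ht'⟩ := asym_family hne hcl hconv hγ hy₂
  have hz : Tendsto (fun u : ℝ => u⁻¹ • (u • w)) atTop (𝓝 w) := by
    refine tendsto_const_nhds.congr' ?_
    filter_upwards [eventually_gt_atTop 0] with u hu
    rw [inv_smul_smul₀ hu.ne']
  have hc : ∀ u : ℝ, 0 < u → u • w ∈ Ξ := fun u hu => hcone _ hu _ hw
  have hm : ∀ u : ℝ, 0 < u → a • x u + b • x' u ∈ X :=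
    fun u hu => hconv (hx u hu) (hx' u hu) ha hb hab
  have ht3 : Tendsto (fun u : ℝ => (u ^ γ)⁻¹ • (a • x u + b • x' u)) atTop
      (𝓝 (a • y₁ + b • y₂)) := by
    refine ((ht.const_smul a).add (ht'.const_smul b)).congr fun u => ?_
    rw [smul_add, smul_comm a, smul_comm b]
  have l1 := hA.2 y₁ hy₁ w hw x (fun u => u • w) hx hc ht hz
  have l2 := hA.2 y₂ hy₂ w hw x' (fun u => u • w) hx' hc ht' hz
  have l3 := hA.2 _ (asym_of_family _ hm ht3) w hw _ (fun u => u • w) hm hc ht3 hz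
  refine le_of_tendsto_of_tendsto l3 ((l1.const_mul a).add (l2.const_mul b)) ?_
  filter_upwards [eventually_gt_atTop 0] with u hu
  have := (hgc _ (hc u hu)).2 (hx u hu) (hx' u hu) ha hb hab
  simp only [smul_eq_mul] at this
  have hp := Real.rpow_pos_of_pos hu ρ
  rw [← mul_div_assoc, ← mul_div_assoc, ← add_div]
  gcongr

open scoped Pointwise in
/-- Step A: the bound at points where the limit function is positive. -/
lemma step_pos {n m : ℕ} (P : Measure (Rn m)) (Ξ : Set (Rn m))
    (Q : Rn m → ℝ) (q : ℝ → ℝ) (lam : Rn m → ℝ) (α : ℝ)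
    (hA1 : Assumption1 P Ξ Q q lam α)
    (X : Set (Rn n)) (g : Rn n → Rn m → ℝ) (γ ρ : ℝ) (gs : Rn n → Rn m → ℝ)
    (hA : CondA1 X Ξ g γ ρ gs) (hqt : Tendsto q atTop atTop)
    (yu : ℝ → Rn n) (y₀ : Rn n)
    (hyuX : ∀ u : ℝ, 0 < u → (u ^ γ) • yu u ∈ X)
    (hy₀ : y₀ ∈ asymCone X γ)
    (hyconv : Tendsto yu atTop (𝓝 y₀)) (w0 : Rn m) (hw0 : w0 ∈ Ξ) (hpos : 0 < gs y₀ w0)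
    (b : ℝ) (hb : lam w0 < b) :
    Filter.limsup
        (fun u : ℝ =>
          ENNReal.log (P {z : Rn m | 0 < g ((u ^ γ) • yu u) z}) /
            ((-(q u) : ℝ) : EReal))
        atTop ≤ (b : EReal) := by
  obtain ⟨hprob, -, hcl, hcone, hPΞ, hsupp, hdens, -, hq, hQ, -⟩ := hA1
  obtain ⟨b', hb1, hb2⟩ := exists_between hb
  obtain ⟨δ, hδ, U, hU⟩ := unif_of_families hw0
    (fun u w => 0 < g ((u ^ γ) • yu u) (u • w) ∧ Q (u • w) / q u < b') (by
      intro W hW hWt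
      have h1 := hQ.2.2.2 w0 hw0 W (fun u _ => hW u) hWt
      have h2 := hA.2 y₀ hy₀ w0 hw0 (fun u => (u ^ γ) • yu u) (fun u => u • W u) hyuX
        (fun u hu => hcone u hu _ (hW u))
        (hyconv.congr' (by
          filter_upwards [eventually_gt_atTop 0] with u hu
          rw [inv_smul_smul₀ (Real.rpow_pos_of_pos hu γ).ne']))
        (hWt.congr' (by
          filter_upwards [eventually_gt_atTop 0] with u hu
          rw [inv_smul_smul₀ hu.ne']))
      filter_upwards [h2.eventually (lt_mem_nhds hpos), h1.eventually (gt_mem_nhds hb1),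
        eventually_gt_atTop 0] with u h3 h4 hu
      exact ⟨(div_pos_iff_of_pos_right (Real.rpow_pos_of_pos hu ρ)).1 h3, h4⟩)
  set T : Set (Rn m) := Metric.ball w0 δ ∩ Ξ with hT
  have hTm : MeasurableSet T := Metric.isOpen_ball.measurableSet.inter hcl.measurableSet
  have hTtop : volume T ≠ ⊤ :=
    ((measure_mono inter_subset_left).trans_lt measure_ball_lt_top).ne
  have hT0 : volume T ≠ 0 := by
    intro h0
    have hac : P ≪ volume := by rw [hdens]; exact withDensity_absolutelyContinuous _ _
    have hPT : P T = 0 := hac h0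
    have hΞc : P Ξᶜ = 0 := (prob_compl_eq_zero_iff hcl.measurableSet).2 hPΞ
    have hball : P (Metric.ball w0 δ) = 0 := by
      refine measure_mono_null (t := T ∪ Ξᶜ) ?_ (measure_union_null hPT hΞc)
      intro z hz
      by_cases hzΞ : z ∈ Ξ
      · exact Or.inl ⟨hz, hzΞ⟩
      · exact Or.inr hzΞ
    have := hsupp (Metric.ball w0 δ)ᶜ Metric.isOpen_ball.isClosed_compl
      ((prob_compl_eq_one_iff Metric.isOpen_ball.measurableSet).2 hball) hw0
    exact this (Metric.mem_ball_self hδ)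
  set c : ℝ := (volume T).toReal with hc
  have hc0 : 0 < c := ENNReal.toReal_pos hT0 hTtop
  have hbound : ∀ u, U ≤ u → 1 ≤ u →
      ENNReal.ofReal (Real.exp (-(q u * b')) * c) ≤ P {z : Rn m | 0 < g ((u ^ γ) • yu u) z} := by
    intro u hu hu1
    have hu0 : 0 < u := by linarith
    have hqu := hq.1 u hu0
    have hTu : MeasurableSet (u • T) := hTm.const_smul_of_ne_zero hu0.ne'
    have hsub : u • T ⊆ {z : Rn m | 0 < g ((u ^ γ) • yu u) z} := by
      rintro _ ⟨w, hw, rfl⟩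
      exact (hU u hu w hw.2 hw.1).1
    refine le_trans ?_ (measure_mono hsub)
    rw [hdens, withDensity_apply _ hTu]
    have h1 : ∫⁻ _ in u • T, ENNReal.ofReal (Real.exp (-(q u * b'))) ∂volume ≤
        ∫⁻ z in u • T, ENNReal.ofReal (Ξ.indicator (fun z' => Real.exp (-(Q z'))) z) ∂volume := by
      refine setLIntegral_mono' hTu ?_
      rintro _ ⟨w, hw, rfl⟩
      have hmem : u • w ∈ Ξ := hcone u hu0 _ hw.2
      show _ ≤ ENNReal.ofReal (Ξ.indicator _ (u • w))
      rw [indicator_of_mem hmem]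
      apply ENNReal.ofReal_le_ofReal
      apply Real.exp_le_exp.2
      have := (hU u hu w hw.2 hw.1).2
      rw [div_lt_iff₀ hqu] at this
      linarith
    refine le_trans ?_ h1
    rw [setLIntegral_const, ENNReal.ofReal_mul (Real.exp_pos _).le, hc, ENNReal.ofReal_toReal hTtop,
      Measure.addHaar_smul]
    gcongr
    have h2 : (1 : ENNReal) ≤ ENNReal.ofReal |u ^ Module.finrank ℝ (Rn m)| := by
      rw [ENNReal.one_le_ofReal, abs_of_nonneg (by positivity)]
      exact one_le_pow₀ hu1
    calc volume T = 1 * volume T := (one_mul _).symm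
      _ ≤ _ := by gcongr
  refine limsup_le_of_le (h := ?_)
  have hlim : Tendsto (fun u => b' - Real.log c / q u) atTop (𝓝 (b' - 0)) :=
    tendsto_const_nhds.sub (hqt.const_div_atTop _)
  rw [sub_zero] at hlim
  filter_upwards [hlim.eventually (gt_mem_nhds hb2), eventually_ge_atTop U,
    eventually_ge_atTop 1] with u h1 h2 h3
  have hqu := hq.1 u (by linarith)
  have h4 := ENNReal.log_le_log (hbound u h2 h3)
  rw [ENNReal.log_ofReal_of_pos (by positivity), Real.log_mul (Real.exp_pos _).ne' hc0.ne',
    Real.log_exp] at h4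
  have hneg : ((-(q u) : ℝ) : EReal) ≤ 0 := by exact_mod_cast (by linarith : -(q u) ≤ 0)
  refine (EReal.antitone_div_right_of_nonpos hneg h4).trans ?_
  show ((_ : ℝ) : EReal) / ((-(q u) : ℝ) : EReal) ≤ _
  rw [← EReal.coe_div, EReal.coe_le_coe_iff]
  have : (-(q u * b') + Real.log c) / -(q u) = b' - Real.log c / q u := by
    field_simp
    ring
  rw [this]
  exact h1.le

/-- LDP upper bound for the violation probability: along any family
`(y_u)` with `u^γ y_u ∈ X` and `y_u → y₀ ∈ X^∞_γ`,
`limsup_{u→∞} log P(g(u^γ y_u, ·) > 0) / (−q(u)) ≤ I(y₀)`,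
where `I(y) = inf{lam(w) : w ∈ Ξ, gs(y, w) ≥ 0}` (with `inf ∅ = ⊤`, `log 0 = ⊥`). -/
theorem ldp_violation_upper {n m : ℕ} (P : Measure (Rn m)) (Ξ : Set (Rn m))
    (Q : Rn m → ℝ) (q : ℝ → ℝ) (lam : Rn m → ℝ) (α : ℝ)
    (hA1 : Assumption1 P Ξ Q q lam α)
    (X : Set (Rn n)) (g : Rn n → Rn m → ℝ) (γ ρ : ℝ) (gs : Rn n → Rn m → ℝ)
    (hA2 : Assumption2 X Ξ g γ ρ gs)
    (yu : ℝ → Rn n) (y₀ : Rn n)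
    (hyuX : ∀ u : ℝ, 0 < u → (u ^ γ) • yu u ∈ X)
    (hy₀ : y₀ ∈ asymCone X γ)
    (hyconv : Tendsto yu atTop (𝓝 y₀)) :
    Filter.limsup
        (fun u : ℝ =>
          ENNReal.log (P {z : Rn m | 0 < g ((u ^ γ) • yu u) z}) /
            ((-(q u) : ℝ) : EReal))
        atTop
      ≤ ⨅ w ∈ {w ∈ Ξ | 0 ≤ gs y₀ w}, (lam w : EReal) := by

  have hA1' := hA1
  have hA2' := hA2
  obtain ⟨hprob, hΞne, hΞcl, hcone, hPΞ, hsupp, hdens, hα, hq, hQ, hlampos⟩ := hA1'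
  obtain ⟨⟨hXne, hXcl, hXc, -, -, -, hgc, -, -⟩, hγ, hρ, hA, ⟨y1, hy1⟩, h3, h4, -⟩ := hA2'
  have h0Ξ : (0 : Rn m) ∈ Ξ := cone_zero hΞne hΞcl hcone
  obtain ⟨w1, hw1, hgw1⟩ := h4 y1 hy1
  have hw10 : w1 ≠ 0 := by
    rintro rfl
    exact absurd hgw1 (not_lt.2 (h3 y1 hy1).le)
  have hqt : Tendsto q atTop atTop := by
    have hn : 0 < ‖w1‖ := norm_pos_iff.2 hw10
    have hz : ‖w1‖⁻¹ • w1 ∈ Ξ := hcone _ (by positivity) _ hw1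
    have hz1 : ‖‖w1‖⁻¹ • w1‖ = 1 := by
      rw [norm_smul, norm_inv, norm_norm, inv_mul_cancel₀ hn.ne']
    exact q_tendsto hcone hα hq hQ hz hz1 (hlampos _ hz hz1)
  have key := step_pos P Ξ Q q lam α hA1 X g γ ρ gs hA hqt yu y₀ hyuX hy₀ hyconv
  -- behaviour of the limit function near the origin
  have hcontw : ∀ y ∈ asymCone X γ, ∀ w ∈ Ξ,
      Tendsto (fun r : ℝ => gs y (r⁻¹ • w)) atTop (𝓝 (gs y 0)) := by
    intro y hy w hw
    have h1 : Tendsto (fun r : ℝ => (y, r⁻¹ • w)) atTop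
        (𝓝[(asymCone X γ) ×ˢ Ξ] (y, (0 : Rn m))) := by
      refine tendsto_nhdsWithin_iff.2 ⟨?_, ?_⟩
      · refine tendsto_const_nhds.prodMk_nhds ?_
        have := (tendsto_inv_atTop_zero (𝕜 := ℝ)).smul_const w
        rwa [zero_smul] at this
      · filter_upwards [eventually_gt_atTop 0] with r hr
        exact ⟨hy, hcone _ (by positivity) _ hw⟩
    exact (hA.1 (y, 0) ⟨hy, h0Ξ⟩).tendsto.comp h1
  have hresc : ∀ y ∈ asymCone X γ, ∀ w ∈ Ξ, ∀ r : ℝ, 0 < r →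
      gs (r ^ γ • y) w = r ^ ρ * gs y (r⁻¹ • w) := by
    intro y hy w hw r hr
    have := gs_homog hXne hXcl hXc hγ hcone hA hy (hcone r⁻¹ (by positivity) w hw) hr
    rwa [smul_inv_smul₀ hr.ne'] at this
  -- far along the ray the limit function is negative
  have hfar : ∀ y ∈ asymCone X γ \ {0}, ∀ w ∈ Ξ, ∃ r : ℝ, 1 < r ∧ gs (r ^ γ • y) w < 0 := by
    intro y hy w hw
    obtain ⟨r, hr1, hr2⟩ := (((hcontw y hy.1 w hw).eventually (gt_mem_nhds (h3 y hy))).and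
      (eventually_gt_atTop 1)).exists
    refine ⟨r, hr2, ?_⟩
    rw [hresc y hy.1 w hw r (by linarith)]
    exact mul_neg_of_pos_of_neg (Real.rpow_pos_of_pos (by linarith) _) hr1
  have hlamcont := hQ.2.2.1
  refine le_iInf₂ fun w hw => ?_
  obtain ⟨hwΞ, hgw⟩ := hw
  refine EReal.le_of_forall_lt_iff_le.1 fun b hb => ?_
  have hb : lam w < b := by exact_mod_cast hb
  by_cases hy0 : y₀ = 0
  · rcases lt_or_gt_of_ne hγ with hneg | hposγ
    · -- impossible case
      exfalso
      have hl : Tendsto (fun r : ℝ => gs (r ^ γ • y1) w) atTop (𝓝 (gs y₀ w)) := by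
        have h1 : Tendsto (fun r : ℝ => (r ^ γ • y1, w)) atTop
            (𝓝[(asymCone X γ) ×ˢ Ξ] (y₀, w)) := by
          refine tendsto_nhdsWithin_iff.2 ⟨?_, ?_⟩
          · refine Tendsto.prodMk_nhds ?_ tendsto_const_nhds
            have h2 := tendsto_rpow_neg_atTop (neg_pos.2 hneg)
            rw [neg_neg] at h2
            have := h2.smul_const y1
            rwa [zero_smul, ← hy0] at this
          · filter_upwards [eventually_gt_atTop 0] with r hr
            exact ⟨asym_scale hXne hXcl hXc hγ hy1.1 hr, hwΞ⟩
        exact (hA.1 (y₀, w) ⟨hy₀, hwΞ⟩).tendsto.comp h1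
      have hlt := h3 y1 hy1
      have : gs y₀ w ≤ gs y1 0 / 2 := by
        refine le_of_tendsto hl ?_
        filter_upwards [(hcontw y1 hy1.1 w hwΞ).eventually
          (gt_mem_nhds (show gs y1 0 < gs y1 0 / 2 by linarith)), eventually_ge_atTop 1] with r h5 h6
        rw [hresc y1 hy1.1 w hwΞ r (by linarith)]
        have : 1 ≤ r ^ ρ := Real.one_le_rpow h6 hρ
        nlinarith
      linarith
    · -- `y₀ = 0`, `γ > 0`
      obtain ⟨r, hr1, hr2⟩ := hfar y1 hy1 w1 hw1
      have hS : 1 < r ^ γ := Real.one_lt_rpow hr1 hposγ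
      set S := r ^ γ with hSdef
      have hconvx := gs_convex hXne hXcl hXc hγ hcone hA hgc hy₀
        (asym_scale hXne hXcl hXc hγ hy1.1 (show 0 < r by linarith)) hw1
        (a := 1 - S⁻¹) (b := S⁻¹) (by
          have := inv_le_one_of_one_le₀ hS.le
          linarith) (by positivity) (by ring)
      rw [← hSdef, inv_smul_smul₀ (by linarith), hy0, smul_zero, zero_add] at hconvx
      have hSi : 0 < S⁻¹ := by positivity
      have hSi1 : S⁻¹ < 1 := inv_lt_one_of_one_lt₀ hS
      have hg0 : 0 < gs 0 w1 := by
        by_contra hcon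
        push Not at hcon
        nlinarith [mul_neg_of_pos_of_neg hSi hr2,
          mul_nonneg (sub_nonneg.2 hSi1.le) (neg_nonneg.2 hcon)]
      have hlam0 : lam 0 = 0 := by
        have h5 := hQ.2.2.2 0 h0Ξ (fun _ => 0) (fun _ _ => h0Ξ) tendsto_const_nhds
        simp only [smul_zero] at h5
        exact tendsto_nhds_unique h5 (hqt.const_div_atTop _)
      have hlt : Tendsto (fun t : ℝ => lam (t⁻¹ • w1)) atTop (𝓝 (lam 0)) := by
        refine (hlamcont 0 h0Ξ).tendsto.comp (tendsto_nhdsWithin_iff.2 ⟨?_, ?_⟩)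
        · have := (tendsto_inv_atTop_zero (𝕜 := ℝ)).smul_const w1
          rwa [zero_smul] at this
        · filter_upwards [eventually_gt_atTop 0] with t ht
          exact hcone _ (by positivity) _ hw1
      have hb0 : lam 0 < b := by
        rw [hlam0]; exact (hQ.2.1 w hwΞ).trans_lt hb
      obtain ⟨t, ht1, ht2⟩ := ((hlt.eventually (gt_mem_nhds hb0)).and
        (eventually_gt_atTop 0)).exists
      have hti : 0 < t⁻¹ := by positivity
      refine key (t⁻¹ • w1) (hcone _ hti _ hw1) ?_ b ht1
      have := gs_homog hXne hXcl hXc hγ hcone hA hy₀ hw1 hti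
      rw [hy0, smul_zero] at this
      rw [hy0, this]
      exact mul_pos (Real.rpow_pos_of_pos hti _) hg0
  · have hy0' : y₀ ∈ asymCone X γ \ {0} := ⟨hy₀, hy0⟩
    have hpos : ∀ t : ℝ, 1 < t → 0 < gs y₀ (t • w) := by
      intro t ht
      have ht0 : 0 < t := by linarith
      have hti : 0 < t⁻¹ := by positivity
      have e1 := hresc y₀ hy₀ w hwΞ t⁻¹ hti
      rw [inv_inv] at e1
      obtain ⟨r, hr1, hr2⟩ := hfar y₀ hy0' w hwΞ
      have hr0 : 0 < r := by linarith
      have hm1 := asym_scale hXne hXcl hXc hγ hy₀ hti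
      have hm2 := asym_scale hXne hXcl hXc hγ hy₀ hr0
      set s := t⁻¹ ^ γ with hs
      set S := r ^ γ with hS
      have hab : 0 < (S - 1) / (S - s) ∧ 0 < (1 - s) / (S - s) ∧ S - s ≠ 0 := by
        have hti1 : t⁻¹ < 1 := inv_lt_one_of_one_lt₀ ht
        rcases lt_or_gt_of_ne hγ with hneg | hposγ
        · have g1 : 1 < s := Real.one_lt_rpow_of_pos_of_lt_one_of_neg hti hti1 hneg
          have g2 : S < 1 := Real.rpow_lt_one_of_one_lt_of_neg hr1 hneg
          exact ⟨div_pos_of_neg_of_neg (by linarith) (by linarith),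
            div_pos_of_neg_of_neg (by linarith) (by linarith), by linarith⟩
        · have g1 : s < 1 := Real.rpow_lt_one hti.le hti1 hposγ
          have g2 : 1 < S := Real.one_lt_rpow hr1 hposγ
          exact ⟨div_pos (by linarith) (by linarith),
            div_pos (by linarith) (by linarith), by linarith⟩
      obtain ⟨ha, hbb, hne⟩ := hab
      have hconvx := gs_convex hXne hXcl hXc hγ hcone hA hgc hm1 hm2 hwΞ
        ha.le hbb.le (by field_simp; ring)
      have e2 : ((S - 1) / (S - s)) • s • y₀ + ((1 - s) / (S - s)) • S • y₀ = y₀ := by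
        rw [smul_smul, smul_smul, ← add_smul]
        have : (S - 1) / (S - s) * s + (1 - s) / (S - s) * S = 1 := by
          field_simp; ring
        rw [this, one_smul]
      rw [e2] at hconvx
      have h5 := mul_neg_of_pos_of_neg hbb hr2
      have h6 : 0 < (S - 1) / (S - s) * gs (s • y₀) w := by linarith
      have h7 := (mul_pos_iff_of_pos_left ha).1 h6
      rw [e1] at h7
      exact (mul_pos_iff_of_pos_left (Real.rpow_pos_of_pos hti _)).1 h7
    have hlt : Tendsto (fun t : ℝ => lam (t • w)) (𝓝[>] 1) (𝓝 (lam w)) := by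
      refine (hlamcont w hwΞ).tendsto.comp (tendsto_nhdsWithin_iff.2 ⟨?_, ?_⟩)
      · have h8 : Tendsto (fun t : ℝ => t • w) (𝓝 1) (𝓝 ((1 : ℝ) • w)) :=
          tendsto_id.smul_const w
        rw [one_smul] at h8
        exact h8.mono_left nhdsWithin_le_nhds
      · filter_upwards [self_mem_nhdsWithin] with t ht
        exact hcone _ (zero_lt_one.trans ht) _ hwΞ
    obtain ⟨t, ht1, ht2⟩ := ((hlt.eventually (gt_mem_nhds hb)).and
      (self_mem_nhdsWithin)).exists
    exact key (t • w) (hcone _ (zero_lt_one.trans ht2) _ hwΞ) (hpos t ht2) b ht1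
end
end

section
/- Let J be a nonempty finite index set and, for each j ∈ J, let C_j ∈ ℝ be nonzero and let a_j ∈ ℝ^n, b_j ∈ ℝ^m be exponent vectors. Fix γ ≠ 0, define p_j := γ · (Σ_{i=1}^n a_{j,i}) + Σ_{k=1}^m b_{j,k} for each j ∈ J, and set ρ := max_{j∈J} p_j. Let y ∈ ℝ^n and w ∈ ℝ^m have strictly positive coordinates, and let (x_u)_{u>0} ⊆ (0,∞)^n and (z_u)_{u>0} ⊆ (0,∞)^m be families such that x_u/u^γ → y and z_u/u → w as u → ∞. Then lim_{u→∞} (1/u^ρ) · Σ_{j∈J} C_j (∏_{i=1}^n (x_u)_i^{a_{j,i}}) (∏_{k=1}^m (z_u)_k^{b_{j,k}}) = Σ_{j∈J : p_j = ρ} C_j (∏_{i=1}^n y_i^{a_{j,i}}) (∏_{k=1}^m w_k^{b_{j,k}}), where all powers are real powers of strictly positive reals. -/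
open Filter Topology

open scoped Classical in
/-- Convergence engine for algebraic constraint functions: for
`g(x, z) = Σ_j C_j x^{a_j} z^{b_j}` on the positive orthants, with
`p_j = γ·⟨1, a_j⟩ + ⟨1, b_j⟩` and `ρ = max_{j ∈ J} p_j`, along every pair of
families with `x_u/u^γ → y > 0` and `z_u/u → w > 0` one has
`g(x_u, z_u)/u^ρ → Σ_{j : p_j = ρ} C_j y^{a_j} w^{b_j}`. -/
theorem algebraic_scaling_convergence {n m : ℕ} {ι : Type*}
    (J : Finset ι) (hJ : J.Nonempty)
    (C : ι → ℝ) (hC : ∀ j ∈ J, C j ≠ 0)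
    (a : ι → Fin n → ℝ) (b : ι → Fin m → ℝ)
    (γ : ℝ) (hγ : γ ≠ 0)
    (p : ι → ℝ) (hp : ∀ j, p j = γ * (∑ i, a j i) + ∑ k, b j k)
    (ρ : ℝ) (hρ : ρ = J.sup' hJ p)
    (y : Fin n → ℝ) (hy : ∀ i, 0 < y i)
    (w : Fin m → ℝ) (hw : ∀ k, 0 < w k)
    (xu : ℝ → Fin n → ℝ) (zu : ℝ → Fin m → ℝ)
    (hxupos : ∀ u : ℝ, 0 < u → ∀ i, 0 < xu u i)
    (hzupos : ∀ u : ℝ, 0 < u → ∀ k, 0 < zu u k)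
    (hxconv : Tendsto (fun u : ℝ => fun i => xu u i / u ^ γ) atTop (𝓝 y))
    (hzconv : Tendsto (fun u : ℝ => fun k => zu u k / u) atTop (𝓝 w)) :
    Tendsto
      (fun u : ℝ =>
        (∑ j ∈ J, C j * (∏ i, (xu u i) ^ (a j i)) * (∏ k, (zu u k) ^ (b j k))) /
          u ^ ρ)
      atTop
      (𝓝 (∑ j ∈ J.filter (fun j => p j = ρ),
        C j * (∏ i, (y i) ^ (a j i)) * (∏ k, (w k) ^ (b j k)))) := by
  have hterm : ∀ j ∈ J, Tendsto (fun u : ℝ =>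
      C j * (∏ i, (xu u i) ^ (a j i)) * (∏ k, (zu u k) ^ (b j k)) / u ^ ρ) atTop
      (𝓝 (if p j = ρ then C j * (∏ i, (y i) ^ (a j i)) * (∏ k, (w k) ^ (b j k)) else 0)) := by
    intro j hj
    have hx : Tendsto (fun u : ℝ => ∏ i, (xu u i / u ^ γ) ^ (a j i)) atTop
        (𝓝 (∏ i, (y i) ^ (a j i))) :=
      tendsto_finsetProd _ fun i _ =>
        ((tendsto_pi_nhds.1 hxconv) i).rpow_const (Or.inl (hy i).ne')
    have hz : Tendsto (fun u : ℝ => ∏ k, (zu u k / u) ^ (b j k)) atTop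
        (𝓝 (∏ k, (w k) ^ (b j k))) :=
      tendsto_finsetProd _ fun k _ =>
        ((tendsto_pi_nhds.1 hzconv) k).rpow_const (Or.inl (hw k).ne')
    have hle : p j ≤ ρ := by
      rw [hρ]
      exact Finset.le_sup' p hj
    have hu : Tendsto (fun u : ℝ => u ^ (p j - ρ)) atTop (𝓝 (if p j = ρ then 1 else 0)) := by
      split_ifs with h
      · simp [h]
      · have h1 : 0 < ρ - p j := sub_pos.2 (lt_of_le_of_ne hle h)
        simpa using tendsto_rpow_neg_atTop h1
    have hmain := ((hx.const_mul (C j)).mul hz).mul hu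
    rw [mul_ite, mul_one, mul_zero] at hmain
    refine hmain.congr' ?_
    filter_upwards [eventually_gt_atTop (0 : ℝ)] with u hu0
    have e1 : ∏ i, (xu u i / u ^ γ) ^ (a j i)
        = (∏ i, (xu u i) ^ (a j i)) / u ^ (γ * ∑ i, a j i) := by
      rw [Finset.mul_sum, Real.rpow_sum_of_pos hu0, ← Finset.prod_div_distrib]
      refine Finset.prod_congr rfl fun i _ => ?_
      rw [Real.div_rpow (hxupos u hu0 i).le (Real.rpow_pos_of_pos hu0 _).le,
        ← Real.rpow_mul hu0.le]
    have e2 : ∏ k, (zu u k / u) ^ (b j k)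
        = (∏ k, (zu u k) ^ (b j k)) / u ^ (∑ k, b j k) := by
      rw [Real.rpow_sum_of_pos hu0, ← Finset.prod_div_distrib]
      refine Finset.prod_congr rfl fun k _ => ?_
      rw [Real.div_rpow (hzupos u hu0 k).le hu0.le]
    rw [e1, e2, Real.rpow_sub hu0, hp j, Real.rpow_add hu0]
    have h1 := (Real.rpow_pos_of_pos hu0 (γ * ∑ i, a j i)).ne'
    have h2 := (Real.rpow_pos_of_pos hu0 (∑ k, b j k)).ne'
    have h3 := (Real.rpow_pos_of_pos hu0 ρ).ne'
    generalize u ^ (γ * ∑ i, a j i) = A at *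
    generalize u ^ (∑ k, b j k) = B at *
    generalize u ^ ρ = R at *
    field_simp
  simp only [Finset.sum_div]
  rw [Finset.sum_filter]
  exact tendsto_finsetSum _ hterm
end
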